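/- arXiv:2111.08199 — 2 statements merged into one kernel-verified Lean document; each statement's English description precedes it below -/
import Mathlib

section
/- Let H be a compact metrizable space, let n ≥ 1, and let v_1, …, v_{n+1} be n+1 distinct points of H. Let (X_1,d_1), …, (X_{n+1},d_{n+1}) be compact connected metric spaces with d_GH((X_i,d_i),(X_j,d_j)) > 0 for all distinct i, j. Then there exists a topological embedding Φ : H → 𝒞 (into the Gromov–Hausdorff space) such that Φ(v_i) = (X_i,d_i) for every i = 1, …, n+1. -/
open GromovHausdorff

namespace GHEmb
open Set Filter Topology TopologicalSpace

noncomputable def ex (k : ℕ) : ℝ := 1 / 2 + 1 / ((k : ℝ) + 2)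

lemma ex_gt (k : ℕ) : 1 / 2 < ex k := by
  unfold ex
  have : (0 : ℝ) < 1 / ((k : ℝ) + 2) := by positivity
  linarith

lemma ex_pos (k : ℕ) : 0 < ex k := by linarith [ex_gt k]

lemma ex_le (k : ℕ) : ex k ≤ 1 := by
  unfold ex
  have : 1 / ((k : ℝ) + 2) ≤ 1 / 2 := by
    apply one_div_le_one_div_of_le (by norm_num)
    linarith [(Nat.cast_nonneg k : (0 : ℝ) ≤ k)]
  linarith

lemma ex_strictAnti : StrictAnti ex := by
  intro a b hab
  unfold ex
  have h : (a : ℝ) < b := by exact_mod_cast hab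
  have h2 : (0 : ℝ) ≤ a := Nat.cast_nonneg a
  have : 1 / ((b : ℝ) + 2) < 1 / ((a : ℝ) + 2) :=
    one_div_lt_one_div_of_lt (by linarith) (by linarith)
  linarith

/-- A path that is too Hölder is constant. -/
lemma holder_const {Y : Type*} [PseudoMetricSpace Y] (f : ℝ → Y) {L C e e' : ℝ} (hL : 0 < L)
    (he' : 0 < e') (hee : e' < e)
    (hf : ∀ a ∈ Icc (0 : ℝ) 1, ∀ b ∈ Icc (0 : ℝ) 1, L * dist (f a) (f b) ^ e' ≤ C * |a - b| ^ e) :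
    dist (f 0) (f 1) = 0 := by
  have hC : 0 ≤ C := by
    have := hf 0 (by simp) 1 (by simp)
    simp only [zero_sub, abs_neg, abs_one, Real.one_rpow, mul_one] at this
    exact le_trans (by positivity) this
  set D := (C / L) ^ (1 / e') with hD
  have hD0 : 0 ≤ D := by positivity
  set p := e / e' with hp
  have hp1 : 1 < p := by rw [hp, lt_div_iff₀ he']; linarith
  have key : ∀ a ∈ Icc (0 : ℝ) 1, ∀ b ∈ Icc (0 : ℝ) 1, dist (f a) (f b) ≤ D * |a - b| ^ p := by
    intro a ha b hb
    have h1 : dist (f a) (f b) ^ e' ≤ C / L * |a - b| ^ e := by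
      have := hf a ha b hb
      rw [div_mul_eq_mul_div, le_div_iff₀ hL]; linarith
    have h2 := Real.rpow_le_rpow (by positivity) h1 (by positivity : 0 ≤ 1 / e')
    rw [← Real.rpow_mul dist_nonneg, mul_one_div_cancel he'.ne', Real.rpow_one,
      Real.mul_rpow (by positivity) (by positivity), ← Real.rpow_mul (abs_nonneg _)] at h2
    rw [hD, hp, div_eq_mul_one_div e e']
    exact h2
  have bound : ∀ N : ℕ, 0 < N → dist (f 0) (f 1) ≤ D * (N : ℝ) ^ (-(p - 1)) := by
    intro N hN
    have hN' : (0 : ℝ) < N := by exact_mod_cast hN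
    have h := dist_le_range_sum_dist (fun i : ℕ => f ((i : ℝ) / N)) N
    simp only [Nat.cast_zero, zero_div, div_self hN'.ne'] at h
    refine h.trans ?_
    have h3 : ∀ i ∈ Finset.range N, dist (f ((i : ℝ) / N)) (f (((i + 1 : ℕ) : ℝ) / N))
        ≤ D * (1 / (N : ℝ)) ^ p := by
      intro i hi
      have hi' : ((i : ℝ) + 1) ≤ N := by exact_mod_cast Finset.mem_range.1 hi
      have hi0 : (0 : ℝ) ≤ i := Nat.cast_nonneg i
      have := key ((i : ℝ) / N) ⟨by positivity, by rw [div_le_one hN']; linarith⟩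
        (((i + 1 : ℕ) : ℝ) / N) ⟨by positivity, by rw [div_le_one hN']; push_cast; linarith⟩
      have h4 : |(i : ℝ) / N - ((i + 1 : ℕ) : ℝ) / N| = 1 / (N : ℝ) := by
        rw [← sub_div]; push_cast
        rw [show (i : ℝ) - (i + 1) = -1 by ring, neg_div, abs_neg, abs_of_pos (by positivity)]
      rwa [h4] at this
    refine (Finset.sum_le_sum h3).trans (le_of_eq ?_)
    rw [Finset.sum_const, Finset.card_range, nsmul_eq_mul, one_div,
      Real.inv_rpow hN'.le, neg_sub, Real.rpow_sub hN', Real.rpow_one]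
    field_simp
  have lim : Tendsto (fun N : ℕ => D * (N : ℝ) ^ (-(p - 1))) atTop (𝓝 (D * 0)) :=
    ((tendsto_rpow_neg_atTop (by linarith : 0 < p - 1)).comp
      tendsto_natCast_atTop_atTop).const_mul D
  rw [mul_zero] at lim
  refine le_antisymm (ge_of_tendsto lim ?_) dist_nonneg
  filter_upwards [eventually_gt_atTop 0] with N hN using bound N hN

lemma dist_rpow_triangle {Y : Type*} [PseudoMetricSpace Y] (x y z : Y) {e : ℝ} (h0 : 0 < e)
    (h1 : e ≤ 1) : dist x z ^ e ≤ dist x y ^ e + dist y z ^ e :=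
  (Real.rpow_le_rpow dist_nonneg (dist_triangle x y z) h0.le).trans
    (Real.rpow_add_le_add_rpow dist_nonneg dist_nonneg h0.le h1)

section rho

/-- weighted cube metric -/
noncomputable def term (a : ℕ → ℝ) (u w : ℕ → unitInterval) (j : ℕ) : ℝ :=
  (1 / 2) ^ j * a j * dist (u j) (w j) ^ ex j

noncomputable def tt (a : ℕ → ℝ) (u w : ℕ → unitInterval) : ℝ := ∑' j, term a u w j

lemma unit_dist_le (s t : unitInterval) : dist s t ≤ 1 := by
  rw [Subtype.dist_eq, Real.dist_eq, abs_le]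
  constructor <;> linarith [s.2.1, s.2.2, t.2.1, t.2.2]

variable {a : ℕ → ℝ} (ha0 : ∀ j, 0 ≤ a j) (ha1 : ∀ j, a j ≤ 1)
include ha0

lemma term_nonneg (u w : ℕ → unitInterval) (j : ℕ) : 0 ≤ term a u w j := by
  unfold term
  have := ha0 j
  positivity

include ha1

lemma term_le (u w : ℕ → unitInterval) (j : ℕ) : term a u w j ≤ (1 / 2) ^ j := by
  unfold term
  have h1 : dist (u j) (w j) ^ ex j ≤ 1 :=
    Real.rpow_le_one dist_nonneg (unit_dist_le _ _) (ex_pos j).le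
  have h2 : 0 ≤ dist (u j) (w j) ^ ex j := by positivity
  have h3 : a j * dist (u j) (w j) ^ ex j ≤ 1 := mul_le_one₀ (ha1 j) h2 h1
  rw [mul_assoc]
  exact mul_le_of_le_one_right (by positivity) h3

lemma term_summable (u w : ℕ → unitInterval) : Summable (term a u w) :=
  Summable.of_nonneg_of_le (term_nonneg ha0 u w) (term_le ha0 ha1 u w) summable_geometric_two

lemma tt_triangle (u w z : ℕ → unitInterval) : tt a u z ≤ tt a u w + tt a w z := by
  unfold tt
  rw [← (term_summable ha0 ha1 u w).tsum_add (term_summable ha0 ha1 w z)]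
  refine (term_summable ha0 ha1 u z).tsum_le_tsum (fun j => ?_)
    ((term_summable ha0 ha1 u w).add (term_summable ha0 ha1 w z))
  unfold term
  rw [← mul_add]
  exact mul_le_mul_of_nonneg_left (dist_rpow_triangle _ _ _ (ex_pos j) (ex_le j))
    (mul_nonneg (by positivity) (ha0 j))

end rho

section rho2
variable {ι : Type} [Fintype ι] {X : ι → Type} [∀ i, MetricSpace (X i)]

abbrev KK (X : ι → Type) : Type := (∀ i, X i) × (ℕ → unitInterval)

noncomputable def bb (lam r : ℝ) {Y : Type} [MetricSpace Y] (x y : Y) : ℝ :=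
  lam * dist x y + r * dist x y ^ (1 / 2 : ℝ)

noncomputable def rho (lam : ι → ℝ) (r : ℝ) (a : ℕ → ℝ) (x y : KK X) : ℝ :=
  ∑ i, bb (lam i) r (x.1 i) (y.1 i) + r * tt a x.2 y.2

variable {lam : ι → ℝ} {r : ℝ} {a : ℕ → ℝ}

lemma rho_self (x : KK X) : rho lam r a x x = 0 := by
  simp [rho, bb, tt, term, fun j => (ex_pos j).ne']

lemma rho_symm (x y : KK X) : rho lam r a x y = rho lam r a y x := by
  simp [rho, bb, tt, term, dist_comm]

variable (hl : ∀ i, 0 ≤ lam i) (hr : 0 ≤ r) (ha0 : ∀ j, 0 ≤ a j)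
include hl hr

lemma bb_nonneg {Y : Type} [MetricSpace Y] (i : ι) (x y : Y) : 0 ≤ bb (lam i) r x y := by
  unfold bb
  have := hl i
  positivity

include ha0

lemma tt_nonneg' (u w : ℕ → unitInterval) : 0 ≤ tt a u w := tsum_nonneg (term_nonneg ha0 u w)

lemma rho_nonneg (x y : KK X) : 0 ≤ rho lam r a x y :=
  add_nonneg (Finset.sum_nonneg fun i _ => bb_nonneg hl hr i _ _)
    (mul_nonneg hr (tt_nonneg' hl hr ha0 _ _))

variable (ha1 : ∀ j, a j ≤ 1)
include ha1

lemma rho_triangle (x y z : KK X) : rho lam r a x z ≤ rho lam r a x y + rho lam r a y z := by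
  unfold rho
  have h1 := mul_le_mul_of_nonneg_left (tt_triangle ha0 ha1 x.2 y.2 z.2) hr
  have h2 : ∑ i, bb (lam i) r (x.1 i) (z.1 i) ≤
      ∑ i, bb (lam i) r (x.1 i) (y.1 i) + ∑ i, bb (lam i) r (y.1 i) (z.1 i) := by
    rw [← Finset.sum_add_distrib]
    refine Finset.sum_le_sum fun i _ => ?_
    unfold bb
    have h3 := mul_le_mul_of_nonneg_left (dist_triangle (x.1 i) (y.1 i) (z.1 i)) (hl i)
    have h4 := mul_le_mul_of_nonneg_left (dist_rpow_triangle (x.1 i) (y.1 i) (z.1 i)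
      (by norm_num : (0 : ℝ) < 1 / 2) (by norm_num)) hr
    linarith
  linarith

/-- each single term is bounded by rho -/
lemma bb_le_rho (x y : KK X) (i : ι) : r * dist (x.1 i) (y.1 i) ^ (1 / 2 : ℝ) ≤ rho lam r a x y := by
  have h1 : bb (lam i) r (x.1 i) (y.1 i) ≤ ∑ i, bb (lam i) r (x.1 i) (y.1 i) :=
    Finset.single_le_sum (f := fun i => bb (lam i) r (x.1 i) (y.1 i))
      (fun i _ => bb_nonneg hl hr i _ _) (Finset.mem_univ i)
  have h2 := mul_nonneg hr (tt_nonneg' hl hr ha0 x.2 y.2)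
  have h3 : 0 ≤ lam i * dist (x.1 i) (y.1 i) := mul_nonneg (hl i) dist_nonneg
  unfold rho
  unfold bb at h1 ⊢
  linarith

lemma term_le_rho (x y : KK X) (j : ℕ) : r * term a x.2 y.2 j ≤ rho lam r a x y := by
  have h1 : term a x.2 y.2 j ≤ tt a x.2 y.2 :=
    (term_summable ha0 ha1 x.2 y.2).le_tsum j (fun j _ => term_nonneg ha0 _ _ j)
  have h2 := mul_le_mul_of_nonneg_left h1 hr
  have h3 : 0 ≤ ∑ i, bb (lam i) r (x.1 i) (y.1 i) :=
    Finset.sum_nonneg fun i _ => bb_nonneg hl hr i _ _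
  unfold rho
  linarith

omit hr in
/-- upper bound on the size of Hölder classes -/
lemma holder_upper (hr : 0 < r) (κ : ℝ → KK X) (k : ℕ) (C : ℝ)
    (hκ : ∀ s ∈ Icc (0 : ℝ) 1, ∀ t ∈ Icc (0 : ℝ) 1,
      rho lam r a (κ s) (κ t) ≤ C * |s - t| ^ ex k) :
    rho lam r a (κ 0) (κ 1) ≤ r * ∑ j ∈ Finset.range (k + 1), (1 / 2) ^ j * a j := by
  have h1 : ∀ i, dist ((κ 0).1 i) ((κ 1).1 i) = 0 := fun i =>
    holder_const (fun s => (κ s).1 i) hr (by norm_num : (0 : ℝ) < 1 / 2) (ex_gt k)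
      (fun s hs t ht => (bb_le_rho hl hr.le ha0 ha1 _ _ i).trans (hκ s hs t ht))
  have h2 : ∀ j, j ∉ Finset.range (k + 1) → term a (κ 0).2 (κ 1).2 j = 0 := by
    intro j hj
    have hkj : k < j := by simpa using hj
    rcases (ha0 j).eq_or_lt with h0 | h0
    · simp [term, ← h0]
    · have := holder_const (fun s => (κ s).2 j) (L := r * ((1 / 2) ^ j * a j)) (C := C)
        (by positivity) (ex_pos j) (ex_strictAnti hkj)
        (fun s hs t ht => by
          refine le_trans (le_of_eq ?_) ((term_le_rho hl hr.le ha0 ha1 (κ s) (κ t) j).trans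
            (hκ s hs t ht))
          unfold term
          ring)
      simp [term, this, (ex_pos j).ne']
  have h3 : rho lam r a (κ 0) (κ 1) = r * ∑ j ∈ Finset.range (k + 1), term a (κ 0).2 (κ 1).2 j := by
    unfold rho
    rw [Finset.sum_eq_zero (fun i _ => by simp [bb, h1 i]), zero_add, tt, tsum_eq_sum h2]
  rw [h3]
  refine mul_le_mul_of_nonneg_left (Finset.sum_le_sum fun j _ => ?_) hr.le
  unfold term
  exact mul_le_of_le_one_right (mul_nonneg (by positivity) (ha0 j))
    (Real.rpow_le_one dist_nonneg (unit_dist_le _ _) (ex_pos j).le)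

omit ha1 hl in
lemma holder_attained [∀ i, Nonempty (X i)] (k : ℕ) : ∃ κ : ℝ → KK X, ∃ C : ℝ,
    (∀ s ∈ Icc (0 : ℝ) 1, ∀ t ∈ Icc (0 : ℝ) 1,
      rho lam r a (κ s) (κ t) ≤ C * |s - t| ^ ex k) ∧
    rho lam r a (κ 0) (κ 1) = r * ∑ j ∈ Finset.range (k + 1), (1 / 2) ^ j * a j := by
  classical
  let pr : ℝ → unitInterval := Set.projIcc 0 1 zero_le_one
  let κ : ℝ → KK X := fun s => (fun i => Classical.arbitrary _, fun j => if j ≤ k then pr s else 0)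
  have h3 : ∀ s ∈ Icc (0 : ℝ) 1, ∀ t ∈ Icc (0 : ℝ) 1, rho lam r a (κ s) (κ t) =
      r * ∑ j ∈ Finset.range (k + 1), (1 / 2) ^ j * a j * |s - t| ^ ex j := by
    intro s hs t ht
    unfold rho
    rw [Finset.sum_eq_zero (fun i _ => by simp [bb, κ]), zero_add, tt,
      tsum_eq_sum (s := Finset.range (k + 1))]
    · congr 1
      refine Finset.sum_congr rfl fun j hj => ?_
      have hj' : j ≤ k := by simpa [Nat.lt_succ_iff] using hj
      simp [term, κ, hj', pr, Set.projIcc_of_mem zero_le_one hs, Set.projIcc_of_mem zero_le_one ht,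
        Subtype.dist_eq, Real.dist_eq]
    · intro j hj
      have hj' : ¬ j ≤ k := by simpa [Nat.lt_succ_iff] using hj
      simp [term, κ, hj', (ex_pos j).ne']
  refine ⟨κ, r * ∑ j ∈ Finset.range (k + 1), (1 / 2) ^ j * a j, ?_, ?_⟩
  · intro s hs t ht
    rw [h3 s hs t ht, mul_assoc, Finset.sum_mul]
    refine mul_le_mul_of_nonneg_left (Finset.sum_le_sum fun j hj => ?_) hr
    have hj' : j ≤ k := by simpa [Nat.lt_succ_iff] using hj
    refine mul_le_mul_of_nonneg_left ?_ (mul_nonneg (by positivity) (ha0 j))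
    refine Real.rpow_le_rpow_of_exponent_ge' (abs_nonneg _) ?_ (ex_pos k).le
      (ex_strictAnti.antitone hj')
    rw [abs_le]
    constructor <;> linarith [hs.1, hs.2, ht.1, ht.2]
  · rw [h3 0 (by simp) 1 (by simp)]
    simp

end rho2

/-! ### Hölder distance sets as isometry invariants -/

def SS (Z : Type*) [MetricSpace Z] (e : ℝ) : Set ℝ :=
  {s | ∃ γ : ℝ → Z, ∃ C : ℝ, (∀ a ∈ Icc (0 : ℝ) 1, ∀ b ∈ Icc (0 : ℝ) 1,
    dist (γ a) (γ b) ≤ C * |a - b| ^ e) ∧ dist (γ 0) (γ 1) = s}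

lemma SS_subset {Z W : Type*} [MetricSpace Z] [MetricSpace W] (f : Z ≃ᵢ W) (e : ℝ) :
    SS Z e ⊆ SS W e := by
  rintro s ⟨γ, C, h1, h2⟩
  exact ⟨fun a => f (γ a), C, by simpa [f.dist_eq] using h1, by simpa [f.dist_eq] using h2⟩

lemma SS_eq {Z W : Type*} [MetricSpace Z] [MetricSpace W] (f : Z ≃ᵢ W) (e : ℝ) :
    SS Z e = SS W e := (SS_subset f e).antisymm (SS_subset f.symm e)

/-! ### Families of pseudometrics give maps into the Gromov-Hausdorff space -/

section family
variable {K : Type} [TopologicalSpace K] [CompactSpace K] [Nonempty K]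

/-- range of a continuous map as a nonempty compact -/
def ran {E : Type} [MetricSpace E] (g : C(K, E)) : NonemptyCompacts E where
  carrier := range g
  isCompact' := isCompact_range g.continuous
  nonempty' := range_nonempty g

lemma ran_continuous {E : Type} [MetricSpace E] :
    Continuous (ran : C(K, E) → NonemptyCompacts E) := by
  refine (LipschitzWith.mk_one fun f g => ?_ : LipschitzWith 1 _).continuous
  change Metric.hausdorffDist (range f) (range g) ≤ _
  refine Metric.hausdorffDist_le_of_mem_dist dist_nonneg ?_ ?_
  · rintro _ ⟨x, rfl⟩
    exact ⟨g x, ⟨x, rfl⟩, ContinuousMap.dist_apply_le_dist x⟩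
  · rintro _ ⟨x, rfl⟩
    exact ⟨f x, ⟨x, rfl⟩, by rw [dist_comm]; exact ContinuousMap.dist_apply_le_dist x⟩

variable {H : Type*} [TopologicalSpace H]

def fam (ρ : C((H × K) × K, ℝ)) : C(H, C(K, C(K, ℝ))) := ρ.curry.curry

lemma fam_dist (ρ : C((H × K) × K, ℝ)) (h : H)
    (h0 : ∀ x, ρ ((h, x), x) = 0) (hn : ∀ x y, 0 ≤ ρ ((h, x), y))
    (hs : ∀ x y, ρ ((h, x), y) = ρ ((h, y), x))
    (ht : ∀ x y z, ρ ((h, x), z) ≤ ρ ((h, x), y) + ρ ((h, y), z)) (x y : K) :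
    dist (fam ρ h x) (fam ρ h y) = ρ ((h, x), y) := by
  refine le_antisymm ?_ ?_
  · rw [ContinuousMap.dist_le (hn x y)]
    intro z
    change dist (ρ ((h, x), z)) (ρ ((h, y), z)) ≤ _
    rw [Real.dist_eq, abs_le]
    constructor
    · linarith [ht y x z, hs x y]
    · linarith [ht x y z]
  · refine le_trans ?_ (ContinuousMap.dist_apply_le_dist y)
    change _ ≤ dist (ρ ((h, x), y)) (ρ ((h, y), y))
    rw [h0, Real.dist_eq, sub_zero, abs_of_nonneg (hn _ _)]

lemma ran_connected [ConnectedSpace K] {E : Type} [MetricSpace E] (g : C(K, E)) :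
    ConnectedSpace (ran g) :=
  isConnected_iff_connectedSpace.1 (isConnected_range g.continuous)

lemma rep_iso {Z : Type*} [MetricSpace Z] [CompactSpace Z] [Nonempty Z] :
    Nonempty (Z ≃ᵢ (toGHSpace Z).Rep) :=
  toGHSpace_eq_toGHSpace_iff_isometryEquiv.1 (GHSpace.toGHSpace_rep _).symm

lemma rep_connected {Z : Type*} [MetricSpace Z] [CompactSpace Z] [Nonempty Z] [ConnectedSpace Z] :
    ConnectedSpace (toGHSpace Z).Rep := by
  obtain ⟨f⟩ := rep_iso (Z := Z)
  exact f.surjective.connectedSpace f.continuous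

end family

section main
variable {ι : Type} [Fintype ι] {X : ι → Type} [∀ i, MetricSpace (X i)]
  [∀ i, CompactSpace (X i)] [∀ i, Nonempty (X i)]
  {H : Type*} [TopologicalSpace H]

structure Data (ι : Type) (H : Type*) [TopologicalSpace H] where
  lam : H → ι → ℝ
  r : H → ℝ
  a : H → ℕ → ℝ
  lam_cont : ∀ i, Continuous fun h => lam h i
  r_cont : Continuous r
  a_cont : ∀ j, Continuous fun h => a h j
  lam0 : ∀ h i, 0 ≤ lam h i
  r0 : ∀ h, 0 ≤ r h
  a0 : ∀ h j, 0 ≤ a h j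
  a1 : ∀ h j, a h j ≤ 1

variable (X) in
noncomputable def Data.rho (D : Data ι H) : C((H × KK X) × KK X, ℝ) where
  toFun p := GHEmb.rho (D.lam p.1.1) (D.r p.1.1) (D.a p.1.1) p.1.2 p.2
  continuous_toFun := by
    have h1 : Continuous fun p : (H × KK X) × KK X => p.1.1 := by fun_prop
    have hr := D.r_cont.comp h1
    unfold GHEmb.rho bb
    refine Continuous.add (continuous_finset_sum _ fun i _ => ?_) (hr.mul ?_)
    · have hl := (D.lam_cont i).comp h1
      have hd : Continuous fun p : (H × KK X) × KK X => dist (p.1.2.1 i) (p.2.1 i) := by fun_prop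
      exact (hl.mul hd).add (hr.mul (hd.rpow_const fun _ => Or.inr (by norm_num)))
    · unfold tt
      refine continuous_tsum (u := fun j : ℕ => (1 / 2 : ℝ) ^ j) (fun j => ?_)
        summable_geometric_two (fun j p => ?_)
      · have ha := (D.a_cont j).comp h1
        have hd : Continuous fun p : (H × KK X) × KK X => dist (p.1.2.2 j) (p.2.2 j) := by fun_prop
        exact (continuous_const.mul ha).mul (hd.rpow_const fun _ => Or.inr (ex_pos j).le)
      · rw [Real.norm_of_nonneg (term_nonneg (D.a0 _) _ _ _)]
        exact term_le (D.a0 _) (D.a1 _) _ _ _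

variable (X) in
noncomputable def Data.Z (D : Data ι H) (h : H) : NonemptyCompacts C(KK X, ℝ) :=
  ran (fam (D.rho X) h)

lemma Data.dist_eq (D : Data ι H) (h : H) (x y : KK X) :
    dist (fam (D.rho X) h x) (fam (D.rho X) h y)
      = GHEmb.rho (D.lam h) (D.r h) (D.a h) x y :=
  fam_dist (D.rho X) h (fun x => rho_self x)
    (fun x y => rho_nonneg (D.lam0 h) (D.r0 h) (D.a0 h) x y) (fun x y => rho_symm x y)
    (fun x y z => rho_triangle (D.lam0 h) (D.r0 h) (D.a0 h) (D.a1 h) x y z) x y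

variable (X) in
noncomputable def Data.Phi (D : Data ι H) (h : H) : GHSpace := (D.Z X h).toGHSpace

lemma Data.Phi_cont (D : Data ι H) : Continuous (D.Phi X) :=
  toGHSpace_continuous.comp (ran_continuous.comp (fam (D.rho X)).continuous)

lemma Data.Phi_conn (D : Data ι H) [∀ i, ConnectedSpace (X i)] (h : H) :
    ConnectedSpace (D.Phi X h).Rep := by
  have : ConnectedSpace (D.Z X h) := ran_connected _
  exact rep_connected (Z := D.Z X h)

lemma Data.Phi_vertex (D : Data ι H) (h : H) (i : ι) (hr : D.r h = 0) (h1 : D.lam h i = 1)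
    (h0 : ∀ j, j ≠ i → D.lam h j = 0) : D.Phi X h = toGHSpace (X i) := by
  classical
  have hd : ∀ x y : KK X, dist (fam (D.rho X) h x) (fam (D.rho X) h y) = dist (x.1 i) (y.1 i) := by
    intro x y
    rw [D.dist_eq, GHEmb.rho, hr, zero_mul, add_zero, Finset.sum_eq_single i]
    · simp [bb, h1]
    · intro j _ hj
      simp [bb, h0 j hj]
    · simp
  symm
  refine toGHSpace_eq_toGHSpace_iff_isometryEquiv.2 ?_
  let base : ∀ j, X j := fun j => Classical.arbitrary _
  let f : X i → D.Z X h := fun x => ⟨fam (D.rho X) h (Function.update base i x, 0), ⟨_, rfl⟩⟩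
  have hf : Isometry f := Isometry.of_dist_eq fun x y => by
    change dist (fam (D.rho X) h _) (fam (D.rho X) h _) = _
    rw [hd]; simp
  refine ⟨⟨Equiv.ofBijective f ⟨hf.injective, ?_⟩, hf⟩⟩
  rintro ⟨_, x, rfl⟩
  refine ⟨x.1 i, Subtype.ext ?_⟩
  refine dist_eq_zero.1 ?_
  change dist (fam (D.rho X) h _) (fam (D.rho X) h _) = _
  rw [hd]; simp

lemma Data.greatest (D : Data ι H) (h : H) (hr : 0 < D.r h) (k : ℕ) :
    IsGreatest (SS (D.Z X h) (ex k))
      (D.r h * ∑ j ∈ Finset.range (k + 1), (1 / 2) ^ j * D.a h j) := by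
  constructor
  · obtain ⟨κ, C, h1, h2⟩ := holder_attained (X := X) (lam := D.lam h) (D.r0 h) (D.a0 h) k
    refine ⟨fun s => ⟨fam (D.rho X) h (κ s), ⟨_, rfl⟩⟩, C, fun s hs t ht => ?_, ?_⟩
    · change dist (fam (D.rho X) h _) (fam (D.rho X) h _) ≤ _
      rw [D.dist_eq]; exact h1 s hs t ht
    · change dist (fam (D.rho X) h _) (fam (D.rho X) h _) = _
      rw [D.dist_eq]; exact h2
  · rintro _ ⟨γ, C, h1, rfl⟩
    have : ∀ s, ∃ x : KK X, fam (D.rho X) h x = (γ s : C(KK X, ℝ)) := fun s => (γ s).2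
    choose κ hκ using this
    have hd : ∀ s t, dist (γ s) (γ t) = GHEmb.rho (D.lam h) (D.r h) (D.a h) (κ s) (κ t) := by
      intro s t
      rw [← D.dist_eq, hκ, hκ]; rfl
    rw [hd]
    exact holder_upper (D.lam0 h) (D.a0 h) (D.a1 h) hr κ k C
      (fun s hs t ht => by rw [← hd]; exact h1 s hs t ht)

lemma Data.recover (D D' : Data ι H) (h h' : H) (hr : 0 < D.r h) (hr' : 0 < D'.r h')
    (heq : D.Phi X h = D'.Phi X h') (j : ℕ) : D.r h * D.a h j = D'.r h' * D'.a h' j := by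
  obtain ⟨f⟩ := toGHSpace_eq_toGHSpace_iff_isometryEquiv.1 heq
  have hs : ∀ k, D.r h * ∑ j ∈ Finset.range (k + 1), (1 / 2) ^ j * D.a h j =
      D'.r h' * ∑ j ∈ Finset.range (k + 1), (1 / 2) ^ j * D'.a h' j := fun k => by
    have h1 := D.greatest (X := X) h hr k
    rw [SS_eq f] at h1
    exact h1.unique (D'.greatest (X := X) h' hr' k)
  have hp : (0 : ℝ) < (1 / 2) ^ j := by positivity
  have : (1 / 2 : ℝ) ^ j * (D.r h * D.a h j) = (1 / 2) ^ j * (D'.r h' * D'.a h' j) := by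
    cases j with
    | zero => simpa using hs 0
    | succ j =>
      have h1 := hs j
      have h2 := hs (j + 1)
      rw [Finset.sum_range_succ, Finset.sum_range_succ _ (j + 1), mul_add, mul_add, h1] at h2
      linarith
  exact mul_left_cancel₀ hp.ne' this

end main

section choice
variable {H : Type*} [MetricSpace H] {ι : Type} [Fintype ι] [DecidableEq ι]

noncomputable def code [Nonempty H] [SeparableSpace H] (m : ℕ) (h : H) : ℕ → ℝ
  | 0 => 1
  | 1 => 1 / ((m : ℝ) + 1)
  | (j + 2) => min 1 (dist h (denseSeq H j))

noncomputable def theData [Nonempty H] [SeparableSpace H] (v : ι → H) (m : ℕ) : Data ι H where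
  lam h i := ∏ j ∈ Finset.univ.erase i, dist h (v j) / dist (v i) (v j)
  r h := ∏ j, dist h (v j)
  a h := code m h
  lam_cont i := by fun_prop
  r_cont := by fun_prop
  a_cont j := by
    match j with
    | 0 => exact continuous_const
    | 1 => exact continuous_const
    | (j + 2) => simp only [code]; fun_prop
  lam0 h i := Finset.prod_nonneg fun j _ => by positivity
  r0 h := Finset.prod_nonneg fun j _ => by positivity
  a0 h j := by
    match j with
    | 0 => simp [code]
    | 1 => simp only [code]; positivity
    | (j + 2) => simp only [code]; positivity
  a1 h j := by
    match j with
    | 0 => simp [code]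
    | 1 =>
      simp only [code]
      rw [div_le_one (by positivity)]
      linarith [(Nat.cast_nonneg m : (0 : ℝ) ≤ m)]
    | (j + 2) => simp [code]

lemma code_inj [Nonempty H] [SeparableSpace H] (m : ℕ) (h h' : H)
    (heq : ∀ j, code m h j = code m h' j) : h = h' := by
  by_contra hne
  have hpos : 0 < dist h h' := dist_pos.2 hne
  obtain ⟨j, hj⟩ := (denseRange_denseSeq H).exists_dist_lt h
    (ε := min 1 (dist h h') / 2) (by positivity)
  have h1 := heq (j + 2)
  simp only [code] at h1
  have h2 : min 1 (dist h h') ≤ 1 := min_le_left _ _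
  have h3 : min 1 (dist h h') ≤ dist h h' := min_le_right _ _
  rw [min_eq_right (by linarith : dist h (denseSeq H j) ≤ 1)] at h1
  have h4 := dist_triangle_right h h' (denseSeq H j)
  rcases min_choice 1 (dist h' (denseSeq H j)) with h5 | h5 <;> linarith

lemma theData_r_pos [Nonempty H] [SeparableSpace H] (v : ι → H) (m : ℕ) (h : H)
    (hh : h ∉ range v) : 0 < (theData v m).r h :=
  Finset.prod_pos fun j _ => dist_pos.2 fun he => hh ⟨j, he.symm⟩

lemma theData_recover [Nonempty H] [SeparableSpace H] {X : ι → Type} [∀ i, MetricSpace (X i)]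
    [∀ i, CompactSpace (X i)] [∀ i, Nonempty (X i)] (v : ι → H) (m m' : ℕ) (h h' : H)
    (hh : h ∉ range v) (hh' : h' ∉ range v)
    (heq : (theData v m).Phi X h = (theData v m').Phi X h') : m = m' ∧ h = h' := by
  have key := Data.recover (X := X) _ _ h h' (theData_r_pos v m h hh) (theData_r_pos v m' h' hh') heq
  have hr : (theData v m).r h = (theData v m').r h' := by simpa [theData, code] using key 0
  have hc : ∀ j, code m h j = code m' h' j := fun j => by
    have := key j
    rw [hr] at this
    exact mul_left_cancel₀ (theData_r_pos v m' h' hh').ne' this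
  have hm : m = m' := by
    have := hc 1
    simp only [code, one_div, inv_inj] at this
    exact_mod_cast add_right_cancel this
  subst hm
  exact ⟨rfl, code_inj m h h' hc⟩

lemma theData_vertex [Nonempty H] [SeparableSpace H] {X : ι → Type} [∀ i, MetricSpace (X i)]
    [∀ i, CompactSpace (X i)] [∀ i, Nonempty (X i)] (v : ι → H) (hv : Function.Injective v)
    (m : ℕ) (i : ι) : (theData v m).Phi X (v i) = toGHSpace (X i) := by
  refine Data.Phi_vertex _ _ i ?_ ?_ ?_
  · exact Finset.prod_eq_zero (Finset.mem_univ i) (dist_self _)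
  · refine Finset.prod_eq_one fun j hj => div_self ?_
    exact (dist_pos.2 (hv.ne (Finset.ne_of_mem_erase hj).symm)).ne'
  · intro j hj
    refine Finset.prod_eq_zero (i := i) (by simp [hj.symm]) ?_
    simp

end choice
end GHEmb

/-- Let `H` be a compact metrizable space, `n ≥ 1`, and
`v 0, …, v n` be `n+1` distinct points of `H`.  Let `X 0, …, X n` be compact
connected (nonempty) metric spaces with positive pairwise Gromov–Hausdorff
distances.  Then there is a topological embedding `Φ` of `H` into the subset
`𝒞` of the Gromov–Hausdorff space consisting of connected compact metric
spaces (i.e. an embedding into the Gromov–Hausdorff space whose range consists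
of connected spaces) such that `Φ (v i)` is the isometry class of `X i`. -/
theorem statement0 {H : Type*} [TopologicalSpace H] [CompactSpace H]
    [TopologicalSpace.MetrizableSpace H]
    (n : ℕ) (hn : 1 ≤ n) (v : Fin (n + 1) → H) (hv : Function.Injective v)
    (X : Fin (n + 1) → Type) [∀ i, MetricSpace (X i)] [∀ i, CompactSpace (X i)]
    [∀ i, Nonempty (X i)]
    (hconn : ∀ i, ConnectedSpace (X i))
    (hdist : ∀ i j, i ≠ j → 0 < ghDist (X i) (X j)) :
    ∃ Φ : H → GHSpace,
      Topology.IsEmbedding Φ ∧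
      (∀ h : H, ConnectedSpace (Φ h).Rep) ∧
      ∀ i, Φ (v i) = toGHSpace (X i) := by
  classical
  letI : MetricSpace H := TopologicalSpace.metrizableSpaceMetric H
  haveI : Nonempty H := ⟨v 0⟩
  have hX : ∀ i j, toGHSpace (X i) = toGHSpace (X j) → i = j := by
    intro i j h
    by_contra hij
    have h1 := hdist i j hij
    rw [ghDist, h, dist_self] at h1
    exact lt_irrefl _ h1
  -- choose the parameter `m` so that the vertices are not hit by other points
  obtain ⟨m, hm⟩ : ∃ m : ℕ, ∀ i, ∀ h, h ∉ Set.range v →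
      (GHEmb.theData v m).Phi X h ≠ toGHSpace (X i) := by
    by_contra hcon
    push Not at hcon
    choose f g hg hfg using hcon
    have hinj : Function.Injective f := by
      intro m m' hmm
      refine (GHEmb.theData_recover (X := X) v m m' (g m) (g m') (hg m) (hg m') ?_).1
      rw [hfg, hfg, hmm]
    exact not_injective_infinite_finite f hinj
  have hvert := GHEmb.theData_vertex (X := X) v hv m
  refine ⟨(GHEmb.theData v m).Phi X, ?_, fun h => GHEmb.Data.Phi_conn _ h, hvert⟩
  refine ((GHEmb.Data.Phi_cont _).isClosedEmbedding ?_).isEmbedding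
  intro h h' heq
  by_cases hh : h ∈ Set.range v
  · obtain ⟨i, rfl⟩ := hh
    by_cases hh' : h' ∈ Set.range v
    · obtain ⟨j, rfl⟩ := hh'
      rw [hvert, hvert] at heq
      rw [hX i j heq]
    · rw [hvert] at heq
      exact absurd heq.symm (hm i h' hh')
  · by_cases hh' : h' ∈ Set.range v
    · obtain ⟨j, rfl⟩ := hh'
      rw [hvert] at heq
      exact absurd heq (hm j h hh)
    · exact (GHEmb.theData_recover (X := X) v m m h h' hh hh' heq).2
end

section
/- Let H be a compact metrizable space, let n ≥ 1, and let v_1, …, v_{n+1} be n+1 distinct points of H. Let (X_1,d_1), …, (X_{n+1},d_{n+1}) be compact geodesic metric spaces with d_GH((X_i,d_i),(X_j,d_j)) > 0 for all distinct i, j. Then there exists a topological embedding Φ : H → 𝒢 (into the Gromov–Hausdorff space) such that Φ(v_i) = (X_i,d_i) for every i = 1, …, n+1. -/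
open GromovHausdorff

/-- A metric space is *geodesic* if any two points `x, y` are joined by a
geodesic, i.e. a map `γ : [0,1] → X` with `γ 0 = x`, `γ 1 = y` and
`dist (γ s) (γ t) = |s - t| * dist x y`. -/
def IsGeodesicSpace (X : Type*) [MetricSpace X] : Prop :=
  ∀ x y : X, ∃ γ : ℝ → X, γ 0 = x ∧ γ 1 = y ∧
    ∀ s ∈ Set.Icc (0 : ℝ) 1, ∀ t ∈ Set.Icc (0 : ℝ) 1,
      dist (γ s) (γ t) = |s - t| * dist x y

namespace GHE

open Set Filter Topology

/-! ### Quotients of compact pseudometric spaces -/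

instance instCompactQuot (Y : Type*) [TopologicalSpace Y] [CompactSpace Y] :
    CompactSpace (SeparationQuotient Y) :=
  ⟨by
    rw [← SeparationQuotient.range_mk]
    exact isCompact_range SeparationQuotient.continuous_mk⟩

/-- The class in the Gromov-Hausdorff space of the metric quotient of a compact pseudometric
space. -/
noncomputable def GG (Y : Type) [PseudoMetricSpace Y] [Nonempty Y] (_hc : CompactSpace Y) :
    GHSpace :=
  toGHSpace (SeparationQuotient Y)

theorem dist_GG_le {Y Y' : Type} [PseudoMetricSpace Y] [Nonempty Y] (hc : CompactSpace Y)
    [PseudoMetricSpace Y'] [Nonempty Y'] (hc' : CompactSpace Y') (e : Y → Y')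
    (he : Function.Surjective e) {ε : ℝ}
    (h : ∀ x y, |dist x y - dist (e x) (e y)| ≤ ε) :
    dist (GG Y hc) (GG Y' hc') ≤ 0 + ε / 2 + ε := by
  have hs := Function.surjInv_eq (SeparationQuotient.surjective_mk (X := Y))
  set g := Function.surjInv (SeparationQuotient.surjective_mk (X := Y)) with hg
  exact ghDist_le_of_approx_subsets (X := SeparationQuotient Y)
    (Y := SeparationQuotient Y') (s := univ)
    (fun p => SeparationQuotient.mk (e (g p.1))) (ε₁ := 0) (ε₂ := ε) (ε₃ := ε)
    (fun x => ⟨x, mem_univ _, by simp⟩)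
    (fun x => by
      obtain ⟨y, rfl⟩ := SeparationQuotient.surjective_mk x
      obtain ⟨z, rfl⟩ := he y
      refine ⟨⟨SeparationQuotient.mk z, mem_univ _⟩, ?_⟩
      rw [SeparationQuotient.dist_mk]
      have h1 := h z (g (SeparationQuotient.mk z))
      have h2 : dist z (g (SeparationQuotient.mk z)) = 0 := by
        rw [← SeparationQuotient.dist_mk, hs, dist_self]
      rw [h2, zero_sub, abs_neg] at h1
      exact (le_abs_self _).trans h1)
    (fun x y => by
      rw [SeparationQuotient.dist_mk]
      have h1 := h (g x.1) (g y.1)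
      rw [← SeparationQuotient.dist_mk, hs, hs] at h1
      exact h1)

theorem GG_eq_of_map {Y : Type} [PseudoMetricSpace Y] [Nonempty Y] (hc : CompactSpace Y)
    {X : Type} [MetricSpace X] [Nonempty X] [CompactSpace X] (f : Y → X)
    (hf : Function.Surjective f) (h : ∀ x y, dist (f x) (f y) = dist x y) :
    GG Y hc = toGHSpace X := by
  unfold GG
  rw [toGHSpace_eq_toGHSpace_iff_isometryEquiv]
  have hs := Function.surjInv_eq (SeparationQuotient.surjective_mk (X := Y))
  set g := Function.surjInv (SeparationQuotient.surjective_mk (X := Y)) with hg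
  have hi : Isometry (fun q => f (g q)) := by
    refine Isometry.of_dist_eq fun x y => ?_
    rw [h, ← SeparationQuotient.dist_mk, hs, hs]
  refine ⟨⟨Equiv.ofBijective (fun q => f (g q)) ⟨hi.injective, fun x => ?_⟩, hi⟩⟩
  obtain ⟨y, rfl⟩ := hf x
  refine ⟨SeparationQuotient.mk y, ?_⟩
  rw [← dist_eq_zero]
  change dist (f (g (SeparationQuotient.mk y))) (f y) = 0
  rw [h, ← SeparationQuotient.dist_mk, hs, dist_self]

theorem exists_map_of_GG_eq {Y Y' : Type} [PseudoMetricSpace Y] [Nonempty Y]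
    (hc : CompactSpace Y) [PseudoMetricSpace Y'] [Nonempty Y'] (hc' : CompactSpace Y')
    (h : GG Y hc = GG Y' hc') :
    ∃ f : Y → Y', (∀ x y, dist (f x) (f y) = dist x y) ∧ ∀ y, ∃ x, dist (f x) y = 0 := by
  unfold GG at h
  rw [toGHSpace_eq_toGHSpace_iff_isometryEquiv] at h
  obtain ⟨e⟩ := h
  have hs := Function.surjInv_eq (SeparationQuotient.surjective_mk (X := Y'))
  set g := Function.surjInv (SeparationQuotient.surjective_mk (X := Y')) with hg
  refine ⟨fun x => g (e (SeparationQuotient.mk x)), fun x y => ?_, fun y => ?_⟩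
  · rw [← SeparationQuotient.dist_mk, hs, hs, e.dist_eq, SeparationQuotient.dist_mk]
  · obtain ⟨x, hx⟩ := SeparationQuotient.surjective_mk (e.symm (SeparationQuotient.mk y))
    refine ⟨x, ?_⟩
    rw [← SeparationQuotient.dist_mk, hs, hx, e.apply_symm_apply, dist_self]

/-! ### Geodesics -/

/-- A geodesic in a pseudometric space, parametrized by arc length, endpoints up to distance 0. -/
def ArcG {Y : Type*} [PseudoMetricSpace Y] (x y : Y) : Prop :=
  ∃ γ : ℝ → Y, dist (γ 0) x = 0 ∧ dist (γ (dist x y)) y = 0 ∧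
    ∀ s t, 0 ≤ s → s ≤ t → t ≤ dist x y → dist (γ s) (γ t) = t - s

theorem ArcG.of_unit {Y : Type*} [PseudoMetricSpace Y] {x y : Y} (γ : ℝ → Y) (h0 : γ 0 = x)
    (h1 : γ 1 = y)
    (h : ∀ s ∈ Icc (0 : ℝ) 1, ∀ t ∈ Icc (0 : ℝ) 1, dist (γ s) (γ t) = |s - t| * dist x y) :
    ArcG x y := by
  rcases (dist_nonneg (x := x) (y := y)).eq_or_lt with hd | hd
  · refine ⟨fun _ => x, by simp, by simp [← hd], fun s t hs hst ht => ?_⟩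
    rw [dist_self]; linarith
  · refine ⟨fun t => γ (t / dist x y), by simp [h0], ?_, fun s t hs hst ht => ?_⟩
    · simp [div_self hd.ne', h1]
    · have e1 : s / dist x y ≤ t / dist x y := by gcongr
      have e2 : 0 ≤ s / dist x y := by positivity
      have e3 : t / dist x y ≤ 1 := by rw [div_le_one hd]; exact ht
      rw [h _ ⟨e2, e1.trans e3⟩ _ ⟨e2.trans e1, e3⟩, abs_sub_comm, abs_of_nonneg (by linarith)]
      field_simp

theorem ArcG.concat {Y : Type*} [PseudoMetricSpace Y] {x z y : Y}
    (hd : dist x z + dist z y = dist x y) (h1 : ArcG x z) (h2 : ArcG z y) : ArcG x y := by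
  obtain ⟨γ, a0, a1, ha⟩ := h1
  obtain ⟨δ, b0, b1, hb⟩ := h2
  have nz := dist_nonneg (x := x) (y := z)
  have nz' := dist_nonneg (x := z) (y := y)
  have e0 : dist (if (0:ℝ) ≤ dist x z then γ 0 else δ (0 - dist x z)) x = 0 := by
    rw [if_pos nz]; exact a0
  have e1 : dist (if dist x y ≤ dist x z then γ (dist x y) else δ (dist x y - dist x z)) y = 0 := by
    split_ifs with hc
    · have : dist x y = dist x z := by linarith
      have hz : dist z y = 0 := by linarith
      rw [this]
      have := dist_triangle (γ (dist x z)) z y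
      have := dist_nonneg (x := γ (dist x z)) (y := y)
      linarith
    · have : dist x y - dist x z = dist z y := by linarith
      rw [this]; exact b1
  refine ⟨fun t => if t ≤ dist x z then γ t else δ (t - dist x z), e0, e1, ?_⟩
  intro s t hs hst ht
  simp only
  by_cases h1 : t ≤ dist x z
  · rw [if_pos h1, if_pos (hst.trans h1)]
    exact ha s t hs hst h1
  · rw [if_neg h1]
    push Not at h1
    by_cases h2 : s ≤ dist x z
    · rw [if_pos h2]
      have c1 := ha s (dist x z) hs h2 le_rfl
      have c2 := hb 0 (t - dist x z) le_rfl (by linarith) (by linarith)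
      have c3 := ha 0 s le_rfl hs h2
      have c4 := hb (t - dist x z) (dist z y) (by linarith) (by linarith) le_rfl
      have d1 := dist_triangle4 (γ s) (γ (dist x z)) z (δ 0)
      have d2 := dist_triangle (γ s) (δ 0) (δ (t - dist x z))
      have d3 := dist_triangle4 x (γ 0) (γ s) (δ (t - dist x z))
      have d4 := dist_triangle4 x (δ (t - dist x z)) (δ (dist z y)) y
      rw [dist_comm] at a0 b0
      apply le_antisymm <;> linarith
    · rw [if_neg h2]
      push Not at h2
      rw [hb _ _ (by linarith) (by linarith) (by linarith)]
      ring

theorem geodesic_quotient {Y : Type*} [PseudoMetricSpace Y] (h : ∀ x y : Y, ArcG x y) :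
    IsGeodesicSpace (SeparationQuotient Y) := by
  intro x y
  obtain ⟨x, rfl⟩ := SeparationQuotient.surjective_mk x
  obtain ⟨y, rfl⟩ := SeparationQuotient.surjective_mk y
  obtain ⟨γ, a0, a1, ha⟩ := h x y
  refine ⟨fun t => SeparationQuotient.mk (γ (t * dist x y)), ?_, ?_, ?_⟩
  · rw [← dist_eq_zero, SeparationQuotient.dist_mk, zero_mul, a0]
  · rw [← dist_eq_zero, SeparationQuotient.dist_mk, one_mul, a1]
  · have nz := dist_nonneg (x := x) (y := y)
    have main : ∀ s t : ℝ, 0 ≤ s → s ≤ t → t ≤ 1 →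
        dist (γ (s * dist x y)) (γ (t * dist x y)) = |s - t| * dist x y := by
      intro s t hs hst ht
      rw [ha _ _ (by positivity) (by gcongr) (by nlinarith), abs_sub_comm,
        abs_of_nonneg (by linarith)]
      ring
    intro s hs t ht
    rw [SeparationQuotient.dist_mk, SeparationQuotient.dist_mk]
    rcases le_total s t with hst | hst
    · exact main s t hs.1 hst ht.2
    · rw [dist_comm, abs_sub_comm]
      exact main t s ht.1 hst hs.2

theorem geodesic_of_equiv {X Y : Type*} [MetricSpace X] [MetricSpace Y] (e : X ≃ᵢ Y)
    (h : IsGeodesicSpace X) : IsGeodesicSpace Y := by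
  intro x y
  obtain ⟨γ, a0, a1, ha⟩ := h (e.symm x) (e.symm y)
  refine ⟨fun t => e (γ t), by simp [a0], by simp [a1], fun s hs t ht => ?_⟩
  rw [e.dist_eq, ha s hs t ht, e.symm.dist_eq]

theorem geodesic_GG {Y : Type} [PseudoMetricSpace Y] [Nonempty Y] (hc : CompactSpace Y)
    (h : ∀ x y : Y, ArcG x y) : IsGeodesicSpace (GG Y hc).Rep := by
  have := (GG Y hc).toGHSpace_rep
  unfold GG at this
  obtain ⟨e⟩ := toGHSpace_eq_toGHSpace_iff_isometryEquiv.1 this.symm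
  exact geodesic_of_equiv e (geodesic_quotient h)

/-! ### Wedges -/

/-- The wedge (at the point `z0`) of a family of pseudometrics on the same set `Z`. -/
def Wdg {κ Z : Type} (_D : κ → PseudoMetricSpace Z) (_z0 : Z) : Type := κ × Z

section Wdg

variable {κ Z : Type} [DecidableEq κ] (D : κ → PseudoMetricSpace Z) (z0 : Z)

/-- The wedge distance. -/
def wd (p q : κ × Z) : ℝ :=
  if p.1 = q.1 then (D p.1).dist p.2 q.2 else (D p.1).dist p.2 z0 + (D q.1).dist z0 q.2

theorem D_nonneg (k : κ) (x y : Z) : 0 ≤ (D k).dist x y := by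
  let _ := D k; exact dist_nonneg

noncomputable instance : PseudoMetricSpace (Wdg D z0) where
  dist p q := wd D z0 p q
  dist_self p := by simp only [wd, if_true]; exact (D p.1).dist_self _
  dist_comm p q := by
    rcases p with ⟨k, x⟩
    rcases q with ⟨l, y⟩
    by_cases h : k = l
    · subst h
      simp only [wd, if_true]
      exact (D k).dist_comm _ _
    · simp only [wd, if_neg h, if_neg (Ne.symm h)]
      rw [(D k).dist_comm, (D l).dist_comm, add_comm]
  dist_triangle p q r := by
    rcases p with ⟨k, x⟩
    rcases q with ⟨l, y⟩
    rcases r with ⟨m, z⟩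
    have n1 := D_nonneg D
    have t1 := fun k => (D k).dist_triangle
    have c1 := fun k => (D k).dist_comm
    simp only [wd]
    by_cases h1 : k = l <;> by_cases h2 : l = m
    · subst h1; subst h2
      simp only [if_true]
      exact t1 _ _ _ _
    · subst h1
      simp only [if_true, if_neg h2]
      linarith [t1 k x y z0]
    · subst h2
      simp only [if_true, if_neg h1]
      linarith [t1 l z0 y z]
    · simp only [if_neg h1, if_neg h2]
      split_ifs with h3
      · subst h3
        linarith [t1 k x z0 z, n1 l y z0, n1 l z0 y]
      · linarith [n1 l y z0, n1 l z0 y]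

variable {D z0}

/-- The point of the wedge given by `z` in the piece `k`. -/
def pt (D : κ → PseudoMetricSpace Z) (z0 : Z) (k : κ) (z : Z) : Wdg D z0 := (k, z)

theorem dist_same (k : κ) (x y : Z) : dist (pt D z0 k x) (pt D z0 k y) = (D k).dist x y := by
  change wd D z0 _ _ = _
  exact if_pos rfl

theorem dist_diff {k l : κ} (h : k ≠ l) (x y : Z) :
    dist (pt D z0 k x) (pt D z0 l y) = (D k).dist x z0 + (D l).dist z0 y := by
  change wd D z0 _ _ = _
  exact if_neg h

theorem dist_base (k l : κ) (x : Z) :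
    dist (pt D z0 k x) (pt D z0 l z0) = (D k).dist x z0 := by
  by_cases h : k = l
  · subst h; exact dist_same _ _ _
  · rw [dist_diff h, (D l).dist_self, add_zero]

theorem exists_pt (p : Wdg D z0) : ∃ k z, p = pt D z0 k z := ⟨p.1, p.2, rfl⟩

theorem compact_wdg [MetricSpace Z] [CompactSpace Z] [Nonempty κ] (C : ℝ) (hC0 : 0 ≤ C)
    (hC : ∀ k x y, (D k).dist x y ≤ C * dist x y)
    (hfin : ∀ ε > 0, {k | ∃ z, ε ≤ (D k).dist z z0}.Finite) : CompactSpace (Wdg D z0) := by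
  obtain ⟨k0⟩ := ‹Nonempty κ›
  refine ⟨isCompact_iff_ultrafilter_le_nhds.2 fun F _ => ?_⟩
  by_cases hF : ∃ k, range (pt D z0 k) ∈ F
  · obtain ⟨k, hk⟩ := hF
    have hcont : Continuous (pt D z0 k) := by
      refine (LipschitzWith.of_dist_le_mul (K := C.toNNReal) fun x y => ?_).continuous
      rw [dist_same, Real.coe_toNNReal _ hC0]
      exact hC k x y
    obtain ⟨p, _, hp⟩ := isCompact_iff_ultrafilter_le_nhds.1 (isCompact_range hcont) F
      (le_principal_iff.2 hk)
    exact ⟨p, mem_univ _, hp⟩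
  · push Not at hF
    refine ⟨pt D z0 k0 z0, mem_univ _, ?_⟩
    rw [(Metric.nhds_basis_ball).ge_iff]
    intro ε hε
    have hb : (⋃ k ∈ {k | ∃ z, ε ≤ (D k).dist z z0}, range (pt D z0 k)) ∉ F := by
      rw [Ultrafilter.finite_biUnion_mem_iff (hfin ε hε)]
      rintro ⟨k, _, hk⟩
      exact hF k hk
    rw [← Ultrafilter.compl_mem_iff_notMem] at hb
    refine mem_of_superset hb fun p hp => ?_
    obtain ⟨k, z, rfl⟩ := exists_pt p
    rw [Metric.mem_ball, dist_base]
    by_contra hcon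
    push Not at hcon
    apply hp
    exact mem_biUnion (show k ∈ {k | ∃ z, ε ≤ (D k).dist z z0} from ⟨z, hcon⟩) ⟨z, rfl⟩

theorem arc_wdg (h : ∀ k x y, ∃ γ : ℝ → Z, γ 0 = x ∧ γ 1 = y ∧
    ∀ s ∈ Icc (0 : ℝ) 1, ∀ t ∈ Icc (0 : ℝ) 1,
      (D k).dist (γ s) (γ t) = |s - t| * (D k).dist x y) (p q : Wdg D z0) : ArcG p q := by
  have same : ∀ k x y, ArcG (pt D z0 k x) (pt D z0 k y) := by
    intro k x y
    obtain ⟨γ, a0, a1, ha⟩ := h k x y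
    refine ArcG.of_unit (fun t => pt D z0 k (γ t)) (by simp [a0]) (by simp [a1]) ?_
    intro s hs t ht
    rw [dist_same, dist_same, ha s hs t ht]
  obtain ⟨k, x, rfl⟩ := exists_pt p
  obtain ⟨l, y, rfl⟩ := exists_pt q
  by_cases hkl : k = l
  · subst hkl; exact same _ _ _
  · have hz : dist (pt D z0 k z0) (pt D z0 l z0) = 0 := by
      rw [dist_base, (D k).dist_self]
    have h1 : ArcG (pt D z0 k z0) (pt D z0 l y) := by
      obtain ⟨γ, a0, a1, ha⟩ := same l z0 y
      have e : dist (pt D z0 k z0) (pt D z0 l y) = dist (pt D z0 l z0) (pt D z0 l y) := by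
        rw [dist_diff hkl, dist_same, (D k).dist_self, zero_add]
      refine ⟨γ, ?_, by rw [e, a1], fun s t => by rw [e]; exact ha s t⟩
      have := dist_triangle (γ 0) (pt D z0 l z0) (pt D z0 k z0)
      rw [dist_comm] at hz
      exact le_antisymm (by linarith) dist_nonneg
    refine ArcG.concat ?_ (same k x z0) h1
    rw [dist_same, dist_diff hkl, dist_diff hkl, (D k).dist_self]
    ring

end Wdg

/-! ### Weighted products -/

section Weighted

variable {m : ℕ} {X : Fin m → Type} [∀ i, MetricSpace (X i)]

/-- The underlying set of all the pieces. -/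
abbrev ZZ (X : Fin m → Type) : Type := (∀ i, X i) × unitInterval × unitInterval

/-- The weighted `ℓ¹` distance. -/
noncomputable def wdst (a : Fin m → ℝ) (b c : ℝ) (z z' : ZZ X) : ℝ :=
  (∑ i, |a i| * dist (z.1 i) (z'.1 i)) + |b| * dist z.2.1 z'.2.1 + |c| * dist z.2.2 z'.2.2

/-- The weighted `ℓ¹` pseudometric. -/
noncomputable def wPM (X : Fin m → Type) [∀ i, MetricSpace (X i)] (a : Fin m → ℝ) (b c : ℝ) :
    PseudoMetricSpace (ZZ X) where
  dist := wdst a b c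
  dist_self z := by simp [wdst]
  dist_comm z z' := by simp [wdst, dist_comm]
  dist_triangle x y z := by
    have h1 : ∑ i, |a i| * dist (x.1 i) (z.1 i) ≤
        (∑ i, |a i| * dist (x.1 i) (y.1 i)) + ∑ i, |a i| * dist (y.1 i) (z.1 i) := by
      rw [← Finset.sum_add_distrib]
      refine Finset.sum_le_sum fun i _ => ?_
      rw [← mul_add]
      exact mul_le_mul_of_nonneg_left (dist_triangle _ _ _) (abs_nonneg _)
    have h2 := mul_le_mul_of_nonneg_left (dist_triangle x.2.1 y.2.1 z.2.1) (abs_nonneg b)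
    have h3 := mul_le_mul_of_nonneg_left (dist_triangle x.2.2 y.2.2 z.2.2) (abs_nonneg c)
    simp only [wdst]
    linarith

theorem wPM_dist (a : Fin m → ℝ) (b c : ℝ) (z z' : ZZ X) :
    (wPM X a b c).dist z z' = wdst a b c z z' := rfl

theorem wdst_le (a : Fin m → ℝ) (b c : ℝ) (ha : ∀ i, |a i| ≤ 1) (hb : |b| ≤ 1) (hc : |c| ≤ 1)
    (z z' : ZZ X) : wdst a b c z z' ≤ (m + 2) * dist z z' := by
  have e1 : dist z.1 z'.1 ≤ dist z z' := le_max_left _ _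
  have e2 : dist z.2 z'.2 ≤ dist z z' := le_max_right _ _
  have e3 : dist z.2.1 z'.2.1 ≤ dist z.2 z'.2 := le_max_left _ _
  have e4 : dist z.2.2 z'.2.2 ≤ dist z.2 z'.2 := le_max_right _ _
  have h1 : ∑ i, |a i| * dist (z.1 i) (z'.1 i) ≤ ∑ _i : Fin m, dist z z' := by
    refine Finset.sum_le_sum fun i _ => ?_
    have := dist_le_pi_dist z.1 z'.1 i
    have h0 := dist_nonneg (x := z.1 i) (y := z'.1 i)
    nlinarith [ha i]
  have h2 : |b| * dist z.2.1 z'.2.1 ≤ dist z z' := by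
    nlinarith [dist_nonneg (x := z.2.1) (y := z'.2.1)]
  have h3 : |c| * dist z.2.2 z'.2.2 ≤ dist z z' := by
    nlinarith [dist_nonneg (x := z.2.2) (y := z'.2.2)]
  simp only [Finset.sum_const, Finset.card_univ, Fintype.card_fin, nsmul_eq_mul] at h1
  simp only [wdst]
  linarith

theorem wdst_sub_le (a : Fin m → ℝ) (b c : ℝ) (a' : Fin m → ℝ) (b' c' : ℝ) (ε B : ℝ)
    (ha : ∀ i, |a i - a' i| ≤ ε) (hb : |b - b'| ≤ ε) (hc : |c - c'| ≤ ε)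
    (z z' : ZZ X) (hB : dist z z' ≤ B) :
    |wdst a b c z z' - wdst a' b' c' z z'| ≤ (m + 2) * (ε * B) := by
  have hε : 0 ≤ ε := (abs_nonneg _).trans hb
  have e1 : dist z.1 z'.1 ≤ dist z z' := le_max_left _ _
  have e2 : dist z.2 z'.2 ≤ dist z z' := le_max_right _ _
  have e3 : dist z.2.1 z'.2.1 ≤ dist z.2 z'.2 := le_max_left _ _
  have e4 : dist z.2.2 z'.2.2 ≤ dist z.2 z'.2 := le_max_right _ _
  have key : ∀ u v d : ℝ, |u - v| ≤ ε → 0 ≤ d → d ≤ B → |(|u| * d - |v| * d)| ≤ ε * B := by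
    intro u v d h1 h2 h3
    rw [← sub_mul, abs_mul, abs_of_nonneg h2]
    exact mul_le_mul ((abs_abs_sub_abs_le u v).trans h1) h3 h2 hε
  have h1 : |∑ i, (|a i| * dist (z.1 i) (z'.1 i) - |a' i| * dist (z.1 i) (z'.1 i))| ≤
      ∑ _i : Fin m, ε * B := by
    refine (Finset.abs_sum_le_sum_abs _ _).trans (Finset.sum_le_sum fun i _ => ?_)
    have := dist_le_pi_dist z.1 z'.1 i
    exact key _ _ _ (ha i) dist_nonneg (by linarith)
  have h2 := key _ _ (dist z.2.1 z'.2.1) hb dist_nonneg (by linarith)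
  have h3 := key _ _ (dist z.2.2 z'.2.2) hc dist_nonneg (by linarith)
  simp only [Finset.sum_const, Finset.card_univ, Fintype.card_fin, nsmul_eq_mul,
    Finset.sum_sub_distrib] at h1
  simp only [wdst]
  rw [abs_le] at *
  constructor <;> linarith

theorem interval_geo (x y : unitInterval) : ∃ γ : ℝ → unitInterval, γ 0 = x ∧ γ 1 = y ∧
    ∀ s ∈ Icc (0 : ℝ) 1, ∀ t ∈ Icc (0 : ℝ) 1,
      dist (γ s) (γ t) = |s - t| * dist x y := by
  have hm : ∀ t ∈ Icc (0 : ℝ) 1, (x : ℝ) + t * (y - x) ∈ Icc (0 : ℝ) 1 := by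
    intro t ht
    have h1 := x.2.1
    have h2 := x.2.2
    have h3 := y.2.1
    have h4 := y.2.2
    constructor
    · nlinarith [ht.1, ht.2]
    · nlinarith [ht.1, ht.2]
  refine ⟨fun t => projIcc 0 1 zero_le_one ((x : ℝ) + t * (y - x)), ?_, ?_, ?_⟩
  · simp
  · simp
  · intro s hs t ht
    simp only
    rw [Subtype.dist_eq, projIcc_of_mem _ (hm s hs), projIcc_of_mem _ (hm t ht), Subtype.dist_eq,
      Real.dist_eq, Real.dist_eq, abs_sub_comm (x : ℝ), ← abs_mul]
    congr 1
    ring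

theorem wdst_geo (hgeo : ∀ i, IsGeodesicSpace (X i)) (a : Fin m → ℝ) (b c : ℝ) (x y : ZZ X) :
    ∃ γ : ℝ → ZZ X, γ 0 = x ∧ γ 1 = y ∧
    ∀ s ∈ Icc (0 : ℝ) 1, ∀ t ∈ Icc (0 : ℝ) 1,
      wdst a b c (γ s) (γ t) = |s - t| * wdst a b c x y := by
  choose γ h0 h1 h using fun i => hgeo i (x.1 i) (y.1 i)
  obtain ⟨γ', h0', h1', h'⟩ := interval_geo x.2.1 y.2.1
  obtain ⟨δ, k0, k1, kk⟩ := interval_geo x.2.2 y.2.2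
  refine ⟨fun t => (fun i => γ i t, γ' t, δ t), ?_, ?_, ?_⟩
  · simp only [h0, h0', k0]
  · simp only [h1, h1', k1]
  · intro s hs t ht
    simp only [wdst, h' s hs t ht, kk s hs t ht, h _ s hs t ht, mul_add, Finset.mul_sum]
    congr 1
    · congr 1
      · exact Finset.sum_congr rfl fun i _ => by ring
      · ring
    · ring

end Weighted

theorem packing {Z : Type*} [MetricSpace Z] [CompactSpace Z] {ε : ℝ} (hε : 0 < ε) :
    ∃ N : ℕ, ∀ f : Fin N → Z, ∃ i j, i ≠ j ∧ dist (f i) (f j) < ε := by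
  obtain ⟨t, _, ht⟩ := finite_cover_balls_of_compact (isCompact_univ (X := Z)) (half_pos hε)
  obtain ⟨htf, ht⟩ := ht
  refine ⟨htf.toFinset.card + 1, fun f => ?_⟩
  have : ∀ i, ∃ z ∈ htf.toFinset, dist (f i) z < ε / 2 := by
    intro i
    have := ht (mem_univ (f i))
    simp only [mem_iUnion, Metric.mem_ball] at this
    obtain ⟨z, hz, h⟩ := this
    exact ⟨z, by simpa using hz, h⟩
  choose g hg hd using this
  obtain ⟨i, -, j, -, hij, he⟩ := Finset.exists_ne_map_eq_of_card_lt_of_maps_to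
    (s := Finset.univ) (t := htf.toFinset) (by simp) (f := g) (fun i _ => hg i)
  refine ⟨i, j, hij, ?_⟩
  have h1 := hd i
  have h2 := hd j
  rw [← he] at h2
  linarith [dist_triangle_right (f i) (f j) (g i)]

/-! ### Isometry invariants -/

/-- Fat points of a pseudometric space, relative to `Z` and `C`. -/
def Fat (Z : Type) [MetricSpace Z] (C : ℝ) {Y : Type} [PseudoMetricSpace Y] (p : Y) : Prop :=
  ∀ r > 0, ¬ ∃ f : Y → Z, ∀ x y, dist x p < r → dist y p < r → dist x y ≤ C * dist (f x) (f y)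

theorem Fat.map {Z : Type} [MetricSpace Z] {C : ℝ} {Y Y' : Type} [PseudoMetricSpace Y]
    [PseudoMetricSpace Y'] (f : Y → Y') (hf : ∀ x y, dist (f x) (f y) = dist x y) {p : Y}
    (hp : Fat Z C p) : Fat Z C (f p) := by
  rintro r hr ⟨g, hg⟩
  refine hp r hr ⟨g ∘ f, fun x y hx hy => ?_⟩
  rw [← hf]
  exact hg _ _ (by rwa [hf]) (by rwa [hf])

/-- The distances to `p` of the ends of the arms. -/
def Tips {Y : Type} [PseudoMetricSpace Y] (p : Y) : Set ℝ :=
  {r | 0 < r ∧ ∃ x, dist x p = r ∧ ∀ y z, dist x y = dist x z → dist x y < r → dist y z = 0}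

theorem tips_subset {Y Y' : Type} [PseudoMetricSpace Y]
    [PseudoMetricSpace Y'] (f : Y → Y') (hf : ∀ x y, dist (f x) (f y) = dist x y)
    (hs : ∀ y, ∃ x, dist (f x) y = 0) {p : Y} {q : Y'} (hpq : dist (f p) q = 0) :
    Tips p ⊆ Tips q := by
  have sw : ∀ a b c : Y', dist a b = 0 → dist c a = dist c b := by
    intro a b c h
    have h1 := dist_triangle c a b
    have h2 := dist_triangle_right c a b
    linarith
  rintro r ⟨hr, x, hx, h⟩
  refine ⟨hr, f x, ?_, ?_⟩
  · rw [← sw _ _ _ hpq, hf, hx]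
  · intro y z h1 h2
    obtain ⟨y', hy⟩ := hs y
    obtain ⟨z', hz⟩ := hs z
    rw [← sw _ _ _ hy, ← sw _ _ _ hz, hf, hf] at h1
    rw [← sw _ _ _ hy, hf] at h2
    have := h y' z' h1 h2
    rw [← sw _ _ _ hz, dist_comm, ← sw _ _ _ hy, hf, dist_comm, this]

/-! ### The family of spaces -/

section Fam

variable {m : ℕ} {X : Fin m → Type} [∀ i, MetricSpace (X i)]

/-- The pieces: the product of the `a i • X i` and a square of side `s`, and arms. -/
noncomputable def Dw (X : Fin m → Type) [∀ i, MetricSpace (X i)] (N : ℕ → ℕ) (a : Fin m → ℝ)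
    (s : ℝ) (L : ℕ → ℝ) : Option (Σ j, Fin (N j)) → PseudoMetricSpace (ZZ X)
  | none => wPM X a s s
  | some k => wPM X 0 (L k.1) 0

/-- The spaces of the family. -/
abbrev Sp (z0 : ZZ X) (N : ℕ → ℕ) (a : Fin m → ℝ) (s : ℝ) (L : ℕ → ℝ) : Type :=
  Wdg (Dw X N a s L) z0

variable {z0 : ZZ X} {N : ℕ → ℕ} {a : Fin m → ℝ} {s : ℝ} {L : ℕ → ℝ}

theorem Dw_none (x y : ZZ X) : (Dw X N a s L none).dist x y = wdst a s s x y := rfl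

theorem Dw_some (k : Σ j, Fin (N j)) (x y : ZZ X) :
    (Dw X N a s L (some k)).dist x y = |L k.1| * |(x.2.1 : ℝ) - y.2.1| := by
  change wdst _ _ _ _ _ = _
  simp [wdst, Subtype.dist_eq, Real.dist_eq]

theorem Dw_le (ha : ∀ i, |a i| ≤ 1) (hs : |s| ≤ 1) (hL : ∀ j, |L j| ≤ 1) (k) (x y : ZZ X) :
    (Dw X N a s L k).dist x y ≤ (m + 2) * dist x y := by
  cases k with
  | none => exact wdst_le _ _ _ ha hs hs _ _
  | some k => exact wdst_le _ _ _ (by simp) (hL _) (by simp) _ _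

theorem compact_Sp [∀ i, CompactSpace (X i)] (ha : ∀ i, |a i| ≤ 1) (hs : |s| ≤ 1)
    (hL : ∀ j : ℕ, |L j| ≤ 1 / (j + 1)) : CompactSpace (Sp z0 N a s L) := by
  have hL1 : ∀ j : ℕ, |L j| ≤ 1 := fun j => (hL j).trans (by
    rw [div_le_one (by positivity)]; linarith [(Nat.cast_nonneg j : (0:ℝ) ≤ j)])
  refine compact_wdg (m + 2) (by positivity) (Dw_le ha hs hL1) fun ε hε => ?_
  obtain ⟨M, hM⟩ := exists_nat_one_div_lt hε
  refine Set.Finite.subset (Finset.finite_toSet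
    (insert none (((Finset.range M).sigma fun _ => Finset.univ).image some))) ?_
  rintro k ⟨z, hz⟩
  cases k with
  | none => simp
  | some k =>
    obtain ⟨j, i⟩ := k
    simp only [Finset.coe_insert, Set.mem_insert_iff, Finset.mem_coe, Finset.mem_image,
      Finset.mem_sigma, Finset.mem_range, Finset.mem_univ, and_true]
    right
    refine ⟨⟨j, i⟩, ?_, rfl⟩
    by_contra hcon
    push Not at hcon
    rw [Dw_some] at hz
    have h1 : |(z.2.1 : ℝ) - z0.2.1| ≤ 1 := by
      rw [abs_le]
      constructor <;> linarith [z.2.1.2.1, z.2.1.2.2, z0.2.1.2.1, z0.2.1.2.2]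
    have h2 : (1 : ℝ) / (j + 1) ≤ 1 / (M + 1) := by gcongr
    have h3 := hL j
    have h4 := abs_nonneg (L j)
    simp only at hz
    nlinarith

theorem arc_Sp (hgeo : ∀ i, IsGeodesicSpace (X i)) (p q : Sp z0 N a s L) : ArcG p q := by
  refine arc_wdg (fun k x y => ?_) p q
  cases k with
  | none => exact wdst_geo hgeo _ _ _ _ _
  | some k => exact wdst_geo hgeo _ _ _ _ _

/-- The base point. -/
noncomputable abbrev bs (z0 : ZZ X) (N : ℕ → ℕ) (a : Fin m → ℝ) (s : ℝ) (L : ℕ → ℝ) : Sp z0 N a s L :=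
  pt (Dw X N a s L) z0 none z0

theorem not_fat_of_pos (ha : ∀ i, |a i| ≤ 1) (hs : |s| ≤ 1) (hL : ∀ j, |L j| ≤ 1)
    (p : Sp z0 N a s L) (hp : 0 < dist p (bs z0 N a s L)) : ¬ Fat (ZZ X) (m + 2) p := by
  intro h
  refine h _ hp ⟨Prod.snd, ?_⟩
  obtain ⟨k, z, rfl⟩ := exists_pt p
  have same : ∀ x : Sp z0 N a s L, dist x (pt (Dw X N a s L) z0 k z) <
      dist (pt (Dw X N a s L) z0 k z) (bs z0 N a s L) → ∃ y, x = pt (Dw X N a s L) z0 k y := by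
    intro x hx
    obtain ⟨l, y, rfl⟩ := exists_pt x
    by_cases hl : k = l
    · subst hl; exact ⟨y, rfl⟩
    · rw [dist_comm, dist_diff hl, dist_base] at hx
      have := D_nonneg (Dw X N a s L) l z0 y
      linarith
  intro x y hx hy
  obtain ⟨x, rfl⟩ := same x hx
  obtain ⟨y, rfl⟩ := same y hy
  rw [dist_same]
  exact Dw_le ha hs hL k x y

theorem not_fat_of_zero (ha : ∀ i, |a i| ≤ 1) (hs : s = 0) (hL : ∀ j, L j = 0)
    (p : Sp z0 N a s L) : ¬ Fat (ZZ X) (m + 2) p := by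
  intro h
  have hD : ∀ k (x y : ZZ X), (Dw X N a s L k).dist x y ≤ (m + 2) * dist x y :=
    Dw_le ha (by simp [hs]) (by simp [hL])
  have hD0 : ∀ k (x y : ZZ X), (Dw X N a s L (some k)).dist x y = 0 := fun k x y => by
    rw [Dw_some, hL]; simp
  refine h 1 one_pos ⟨fun x => match x with
    | (none, z) => z
    | (some _, _) => z0, ?_⟩
  intro x y _ _
  obtain ⟨k, x, rfl⟩ := exists_pt x
  obtain ⟨l, y, rfl⟩ := exists_pt y
  cases k with
  | none =>
    cases l with
    | none => rw [dist_same]; exact hD _ _ _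
    | some l => rw [dist_diff (by simp), hD0, add_zero]; exact hD _ _ _
  | some k =>
    cases l with
    | none => rw [dist_diff (by simp), hD0, zero_add]; exact hD _ _ _
    | some l =>
      by_cases hkl : some k = some l
      · rw [hkl, dist_same, hD0]; positivity
      · rw [dist_diff hkl, hD0, hD0, add_zero]; positivity

theorem fat_base (hz : (z0.2.1 : ℝ) = 0) (hs : 0 < s)
    (hN : ∀ j, ∀ f : Fin (N j) → ZZ X, ∃ i i', i ≠ i' ∧
      dist (f i) (f i') < 1 / ((m + 2) * ((j:ℝ) + 1) ^ 2))
    (hL : ∀ j : ℕ, L j ≤ 1 / (j + 1)) (hL' : ∀ j : ℕ, s / (j + 2) ≤ L j) :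
    Fat (ZZ X) (m + 2) (bs z0 N a s L) := by
  rintro r hr ⟨f, hf⟩
  obtain ⟨j, hj⟩ := exists_nat_one_div_lt (lt_min hr hs)
  have hj1 := hj.trans_le (min_le_left _ _)
  have hj2 := hj.trans_le (min_le_right _ _)
  have hLp : 0 < L j := lt_of_lt_of_le (by positivity) (hL' j)
  set tip : Fin (N j) → Sp z0 N a s L := fun i =>
    pt (Dw X N a s L) z0 (some ⟨j, i⟩) (z0.1, 1, z0.2.2) with htip
  have d0 : ∀ i, (Dw X N a s L (some ⟨j, i⟩)).dist (z0.1, 1, z0.2.2) z0 = L j := by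
    intro i
    rw [Dw_some]
    simp [hz, abs_of_pos hLp]
  have d1 : ∀ i, dist (tip i) (bs z0 N a s L) = L j := by
    intro i
    rw [htip, dist_base, d0]
  obtain ⟨i, i', hii, hlt⟩ := hN j (fun i => f (tip i))
  have d2 : dist (tip i) (tip i') = 2 * L j := by
    have : (some ⟨j, i⟩ : Option (Σ j, Fin (N j))) ≠ some ⟨j, i'⟩ := by
      simpa using hii
    simp only [htip]
    rw [dist_diff this, (Dw X N a s L (some ⟨j, i'⟩)).dist_comm, d0, d0]
    ring
  have h1 := hf (tip i) (tip i') (by rw [d1]; linarith [hL j]) (by rw [d1]; linarith [hL j])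
  rw [d2] at h1
  have hm : (0:ℝ) < m + 2 := by positivity
  have h2 : ((m:ℝ) + 2) * dist (f (tip i)) (f (tip i')) < 1 / ((j:ℝ) + 1) ^ 2 := by
    calc ((m:ℝ) + 2) * dist (f (tip i)) (f (tip i'))
        < (m + 2) * (1 / ((m + 2) * ((j:ℝ) + 1) ^ 2)) := by gcongr
      _ = _ := by field_simp
  have h3 : 1 / ((j:ℝ) + 1) ^ 2 ≤ s / (j + 1) := by
    have : 1 / ((j:ℝ) + 1) ^ 2 = (1 / (j + 1)) / (j + 1) := by field_simp
    rw [this]; gcongr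
  have h4 : s / ((j:ℝ) + 1) ≤ 2 * (s / (j + 2)) := by
    rw [← mul_div_assoc, div_le_div_iff₀ (by positivity) (by positivity)]
    have : (0:ℝ) ≤ j := Nat.cast_nonneg j
    nlinarith
  linarith [hL' j]

theorem exists_moved (t : unitInterval) {δ : ℝ} (h0 : 0 ≤ δ) (h : δ ≤ 1 / 2) :
    ∃ t' : unitInterval, |(t : ℝ) - t'| = δ := by
  by_cases ht : (t : ℝ) ≤ 1 / 2
  · refine ⟨⟨t + δ, by linarith [t.2.1], by linarith⟩, ?_⟩
    rw [abs_sub_comm]; simp [abs_of_nonneg h0]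
  · refine ⟨⟨t - δ, by linarith, by linarith [t.2.2]⟩, ?_⟩
    simp [abs_of_nonneg h0]

theorem tips_eq (hz : (z0.2.1 : ℝ) = 0) (hs : 0 < s) (hs1 : s ≤ 1) (hL : ∀ j, 0 < L j)
    (hN : ∀ j, 0 < N j) : Tips (bs z0 N a s L) = range L := by
  ext r
  constructor
  · rintro ⟨hr, x, hx, h⟩
    obtain ⟨k, z, rfl⟩ := exists_pt x
    obtain ⟨b, t, u⟩ := z
    cases k with
    | none =>
      exfalso
      have hδ : 0 < min (1 / 2) (r / 2) := by positivity
      set δ := min (1 / 2) (r / 2) with hδ'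
      obtain ⟨t', ht'⟩ := exists_moved t hδ.le (min_le_left _ _)
      obtain ⟨u', hu'⟩ := exists_moved u hδ.le (min_le_left _ _)
      have e1 : dist (pt (Dw X N a s L) z0 none (b, t, u)) (pt (Dw X N a s L) z0 none (b, t', u))
          = s * δ := by
        rw [dist_same, Dw_none]
        simp [wdst, Subtype.dist_eq, Real.dist_eq, ht', abs_of_pos hs]
      have e2 : dist (pt (Dw X N a s L) z0 none (b, t, u)) (pt (Dw X N a s L) z0 none (b, t, u'))
          = s * δ := by
        rw [dist_same, Dw_none]
        simp [wdst, Subtype.dist_eq, Real.dist_eq, hu', abs_of_pos hs]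
      have e3 : dist (pt (Dw X N a s L) z0 none (b, t', u)) (pt (Dw X N a s L) z0 none (b, t, u'))
          = s * δ + s * δ := by
        rw [dist_same, Dw_none]
        simp [wdst, Subtype.dist_eq, Real.dist_eq, hu', abs_sub_comm (t' : ℝ), ht', abs_of_pos hs]
      have hr2 : δ ≤ r / 2 := min_le_right _ _
      have := h _ _ (e1.trans e2.symm) (by rw [e1]; nlinarith)
      rw [e3] at this
      have : 0 < s * δ := by positivity
      linarith
    | some k =>
      have hLk := hL k.1
      have ht0 := t.2.1
      have ht1 := t.2.2
      rw [dist_base, Dw_some, hz, abs_of_pos hLk, sub_zero, abs_of_nonneg ht0] at hx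
      have htp : 0 < (t : ℝ) := by
        rcases ht0.eq_or_lt with h' | h'
        · rw [← h', mul_zero] at hx; linarith
        · exact h'
      rcases ht1.eq_or_lt with h' | h'
      · exact ⟨k.1, by rw [← hx, h', mul_one]⟩
      · exfalso
        have hδ : 0 < min (t : ℝ) (1 - t) / 2 := by
          have := lt_min htp (sub_pos.2 h'); linarith
        have hδ1 : min (t : ℝ) (1 - t) / 2 < t := by
          have := min_le_left (t : ℝ) (1 - t); linarith
        have hδ2 : min (t : ℝ) (1 - t) / 2 < 1 - t := by
          have := min_le_right (t : ℝ) (1 - t); linarith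
        set δ := min (t : ℝ) (1 - t) / 2
        have e1 : dist (pt (Dw X N a s L) z0 (some k) (b, t, u))
            (pt (Dw X N a s L) z0 (some k) (b, ⟨t + δ, by linarith, by linarith⟩, u))
            = L k.1 * δ := by
          rw [dist_same, Dw_some]
          simp [abs_of_pos hLk, abs_of_pos hδ]
        have e2 : dist (pt (Dw X N a s L) z0 (some k) (b, t, u))
            (pt (Dw X N a s L) z0 (some k) (b, ⟨t - δ, by linarith, by linarith⟩, u))
            = L k.1 * δ := by
          rw [dist_same, Dw_some]
          simp [abs_of_pos hLk, abs_of_pos hδ]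
        have := h _ _ (e1.trans e2.symm) (by rw [e1, ← hx]; gcongr)
        rw [dist_same, Dw_some, abs_of_pos hLk] at this
        have e : ((t : ℝ) + δ) - (t - δ) = 2 * δ := by ring
        simp only [e] at this
        rw [abs_of_pos (by positivity)] at this
        have : 0 < L k.1 * (2 * δ) := by positivity
        linarith
  · rintro ⟨j, rfl⟩
    have hLj := hL j
    refine ⟨hL j, pt (Dw X N a s L) z0 (some ⟨j, ⟨0, hN j⟩⟩) (z0.1, 1, z0.2.2), ?_, ?_⟩
    · rw [dist_base, Dw_some]
      simp [hz, abs_of_pos hLj]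
    · set k : Σ j, Fin (N j) := ⟨j, ⟨0, hN j⟩⟩ with hk
      have same : ∀ x : Sp z0 N a s L,
          dist (pt (Dw X N a s L) z0 (some k) (z0.1, 1, z0.2.2)) x < L j →
          ∃ y, x = pt (Dw X N a s L) z0 (some k) y := by
        intro x hx
        obtain ⟨l, y, rfl⟩ := exists_pt x
        by_cases hl : some k = l
        · subst hl; exact ⟨y, rfl⟩
        · rw [dist_diff hl, Dw_some] at hx
          have := D_nonneg (Dw X N a s L) l z0 y
          simp only [hz, hk, abs_of_pos hLj] at hx
          norm_num at hx
          linarith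
      intro y z h1 h2
      obtain ⟨y, rfl⟩ := same y h2
      obtain ⟨z, rfl⟩ := same z (h1 ▸ h2)
      rw [dist_same, dist_same, Dw_some, Dw_some] at h1
      simp only [hk, abs_of_pos hLj] at h1
      have h3 := mul_left_cancel₀ hLj.ne' h1
      have hy := y.2.1.2.2
      have hz := z.2.1.2.2
      have h4 : (y.2.1 : ℝ) = z.2.1 := by
        rw [abs_of_nonneg (by simpa using hy), abs_of_nonneg (by simpa using hz)] at h3
        linarith
      rw [dist_same, Dw_some, h4]
      simp

theorem inj_Sp {a a' : Fin m → ℝ} {s s' : ℝ} {L L' : ℕ → ℝ} [Nonempty (ZZ X)]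
    (f : Sp z0 N a s L → Sp z0 N a' s' L') (hf : ∀ x y, dist (f x) (f y) = dist x y)
    (hsurj : ∀ y, ∃ x, dist (f x) y = 0)
    (ha' : ∀ i, |a' i| ≤ 1) (hs' : |s'| ≤ 1) (hL1 : ∀ j, |L' j| ≤ 1)
    (hfat : Fat (ZZ X) (m + 2) (bs z0 N a s L)) :
    Tips (bs z0 N a s L) ⊆ Tips (bs z0 N a' s' L') := by
  refine tips_subset f hf hsurj ?_
  by_contra hne
  exact not_fat_of_pos ha' hs' hL1 _ (lt_of_le_of_ne dist_nonneg (Ne.symm hne)) (hfat.map f hf)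

theorem dist_Sp_le {a a' : Fin m → ℝ} {s s' : ℝ} {L L' : ℕ → ℝ} {ε B : ℝ}
    (hB : ∀ x y : ZZ X, dist x y ≤ B)
    (ha : ∀ i, |a i - a' i| ≤ ε) (hs : |s - s'| ≤ ε) (hL : ∀ j, |L j - L' j| ≤ ε)
    (x y : Sp z0 N a s L) :
    |dist x y - dist (α := Sp z0 N a' s' L') x y| ≤ 2 * ((m + 2) * (ε * B)) := by
  have hε : 0 ≤ ε := (abs_nonneg _).trans hs
  have hB0 : 0 ≤ B := dist_nonneg.trans (hB z0 z0)
  have key : ∀ k (x y : ZZ X), |(Dw X N a s L k).dist x y - (Dw X N a' s' L' k).dist x y| ≤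
      (m + 2) * (ε * B) := by
    intro k x y
    cases k with
    | none => exact wdst_sub_le _ _ _ _ _ _ _ _ ha hs hs _ _ (hB _ _)
    | some k =>
      exact wdst_sub_le _ _ _ _ _ _ _ _ (fun _ => by simpa using hε) (hL _)
        (by simpa using hε) _ _ (hB _ _)
  have h0 : 0 ≤ (m + 2) * (ε * B) := by positivity
  obtain ⟨k, x, rfl⟩ := exists_pt x
  obtain ⟨l, y, rfl⟩ := exists_pt y
  change |dist (pt (Dw X N a s L) z0 k x) (pt (Dw X N a s L) z0 l y) -
    dist (pt (Dw X N a' s' L') z0 k x) (pt (Dw X N a' s' L') z0 l y)| ≤ _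
  by_cases hkl : k = l
  · subst hkl
    rw [dist_same, dist_same]
    linarith [key k x y]
  · rw [dist_diff hkl, dist_diff hkl]
    have h1 := key k x z0
    have h2 := key l z0 y
    rw [abs_le] at *
    constructor <;> linarith

end Fam

/-! ### The embedding -/

/-- The coordinates used to encode the points of `H`. -/
noncomputable def yy {H : Type*} [MetricSpace H] (q : ℕ → H) : ℕ → H → ℝ
  | 0, _ => 0
  | j + 1, h => min 1 (dist h (q j)) / 2

section yy

variable {H : Type*} [MetricSpace H] (q : ℕ → H)

theorem yy_nonneg (j : ℕ) (h : H) : 0 ≤ yy q j h := by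
  cases j with
  | zero => exact le_rfl
  | succ j => simp only [yy]; positivity

theorem yy_le (j : ℕ) (h : H) : yy q j h ≤ 1 / 2 := by
  cases j with
  | zero => norm_num [yy]
  | succ j => simp only [yy]; linarith [min_le_left 1 (dist h (q j))]

theorem yy_lip (j : ℕ) (h h' : H) : |yy q j h - yy q j h'| ≤ dist h h' := by
  cases j with
  | zero => simp [yy]
  | succ j =>
    simp only [yy]
    have h1 := abs_min_sub_min_le_max 1 (dist h (q j)) 1 (dist h' (q j))
    rw [sub_self, abs_zero, max_eq_right (abs_nonneg _)] at h1
    have h2 := abs_dist_sub_le h h' (q j)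
    rw [← sub_div, abs_div, abs_two]
    have := abs_nonneg (min 1 (dist h (q j)) - min 1 (dist h' (q j)))
    linarith

theorem yy_sep (hq : DenseRange q) {h h' : H} (e : ∀ j, yy q j h = yy q j h') : h = h' := by
  by_contra hne
  have hd : 0 < dist h h' := dist_pos.2 hne
  obtain ⟨j, hj⟩ := hq.exists_dist_lt h (ε := min 1 (dist h h' / 2)) (by positivity)
  have h1 := hj.trans_le (min_le_left _ _)
  have h2 := hj.trans_le (min_le_right _ _)
  have h3 := e (j + 1)
  simp only [yy] at h3
  rw [min_eq_right h1.le] at h3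
  have h4 : min 1 (dist h' (q j)) = dist h (q j) := by linarith
  have h5 : dist h' (q j) = dist h (q j) := by
    rcases min_choice 1 (dist h' (q j)) with h6 | h6 <;> linarith
  have := dist_triangle_right h h' (q j)
  linarith

/-- The lengths of the arms. -/
noncomputable def LL (s : H → ℝ) (h : H) (j : ℕ) : ℝ := s h / (j + 1 + yy q j h)

variable {s : H → ℝ}

theorem LL_den (j : ℕ) (h : H) : (1 : ℝ) ≤ j + 1 + yy q j h := by
  linarith [yy_nonneg q j h, (Nat.cast_nonneg j : (0:ℝ) ≤ j)]

theorem LL_nonneg {h : H} (hs : 0 ≤ s h) (j : ℕ) : 0 ≤ LL q s h j :=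
  div_nonneg hs (by linarith [LL_den q j h])

theorem LL_le {h : H} (hs : 0 ≤ s h) (hs1 : s h ≤ 1) (j : ℕ) : LL q s h j ≤ 1 / (j + 1) := by
  have := yy_nonneg q j h
  unfold LL
  exact div_le_div₀ zero_le_one hs1 (by positivity) (by linarith)

theorem LL_ge {h : H} (hs : 0 ≤ s h) (j : ℕ) : s h / (j + 2) ≤ LL q s h j := by
  have := yy_le q j h
  have := LL_den q j h
  unfold LL
  exact div_le_div_of_nonneg_left hs (by linarith) (by linarith)

theorem LL_lip {h h' : H} (hs : 0 ≤ s h) (hs1 : s h ≤ 1) (j : ℕ) :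
    |LL q s h j - LL q s h' j| ≤ |s h - s h'| + dist h h' := by
  have d1 := LL_den q j h
  have d2 := LL_den q j h'
  have hy := yy_lip q j h h'
  unfold LL
  set u := (j:ℝ) + 1 + yy q j h with hu
  set w := (j:ℝ) + 1 + yy q j h' with hw
  have e : s h / u - s h' / w = (s h - s h') / w + s h * ((w - u) / (u * w)) := by
    field_simp
    ring
  have e1 : |(s h - s h') / w| ≤ |s h - s h'| := by
    rw [abs_div, abs_of_pos (by linarith : 0 < w)]
    exact div_le_self (abs_nonneg _) d2
  have e2 : |s h * ((w - u) / (u * w))| ≤ dist h h' := by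
    rw [abs_mul, abs_div, abs_of_nonneg hs, abs_of_pos (by positivity : 0 < u * w)]
    have : |w - u| / (u * w) ≤ |w - u| := div_le_self (abs_nonneg _) (by nlinarith)
    have h3 : |w - u| ≤ dist h h' := by
      rw [abs_sub_comm]
      have : u - w = yy q j h - yy q j h' := by rw [hu, hw]; ring
      rw [this]; exact hy
    have h4 : 0 ≤ |w - u| / (u * w) := by positivity
    nlinarith
  rw [e]
  exact (abs_add_le _ _).trans (add_le_add e1 e2)

theorem LL_anti {h : H} (hs : 0 < s h) : StrictAnti (LL q s h) := by
  refine strictAnti_nat_of_succ_lt fun j => ?_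
  have h1 := LL_den q j h
  have h2 := yy_le q j h
  have h3 := yy_nonneg q (j + 1) h
  unfold LL
  apply div_lt_div_of_pos_left hs (by linarith)
  push_cast
  linarith

theorem LL_inj (hq : DenseRange q) {h h' : H} (hs : 0 < s h) (hs' : 0 < s h')
    (e : range (LL q s h) = range (LL q s h')) : h = h' := by
  have e' : range (fun j => -LL q s h j) = range (fun j => -LL q s h' j) := by
    have : ∀ f : ℕ → ℝ, range (fun j => -f j) = Set.image Neg.neg (range f) := fun f => by
      rw [← range_comp]; rfl
    rw [this, this, e]
  have key := (StrictMono.range_inj (fun i j hij => neg_lt_neg (LL_anti q hs hij))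
    (fun i j hij => neg_lt_neg (LL_anti q hs' hij))).1 e'
  have key : ∀ j, LL q s h j = LL q s h' j := fun j => neg_injective (congrFun key j)
  have e0 : s h = s h' := by
    have := key 0
    simpa [LL, yy] using this
  refine yy_sep q hq fun j => ?_
  have := key j
  unfold LL at this
  have d1 := LL_den q j h
  have d2 := LL_den q j h'
  rw [← e0, div_eq_div_iff (by linarith) (by linarith)] at this
  have := mul_left_cancel₀ hs.ne' this
  linarith

end yy

theorem main {H : Type*} [MetricSpace H] [CompactSpace H]
    (n : ℕ) (v : Fin (n + 1) → H) (hv : Function.Injective v)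
    (X : Fin (n + 1) → Type) [∀ i, MetricSpace (X i)] [∀ i, CompactSpace (X i)]
    [∀ i, Nonempty (X i)]
    (hgeo : ∀ i, IsGeodesicSpace (X i))
    (hdist : ∀ i j, i ≠ j → 0 < ghDist (X i) (X j)) :
    ∃ Φ : H → GHSpace,
      Topology.IsEmbedding Φ ∧
      (∀ h : H, IsGeodesicSpace (Φ h).Rep) ∧
      ∀ i, Φ (v i) = toGHSpace (X i) := by
  have : Nonempty H := ⟨v 0⟩
  -- the coefficients
  have hA : ∀ i, ∃ f : C(H, ℝ), (∀ j, j ≠ i → f (v j) = 0) ∧ f (v i) = 1 ∧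
      ∀ x, f x ∈ Icc (0 : ℝ) 1 := by
    intro i
    obtain ⟨f, h0, h1, h2⟩ := exists_continuous_zero_one_of_isClosed
      (s := Set.image v {j | j ≠ i}) (t := {v i}) (Set.toFinite _).isClosed isClosed_singleton (by
        rw [Set.disjoint_singleton_right]
        rintro ⟨j, hj, h⟩
        exact hj (hv h))
    exact ⟨f, fun j hj => h0 ⟨j, hj, rfl⟩, h1 rfl, h2⟩
  choose A hA0 hA1 hA2 using hA
  have hA' : ∀ h i, |A i h| ≤ 1 := fun h i => by
    rw [abs_of_nonneg (hA2 i h).1]; exact (hA2 i h).2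
  set s : H → ℝ := fun h => min 1 (Metric.infDist h (range v)) with hsdef
  have hscont : Continuous s := continuous_const.min (Metric.continuous_infDist_pt _)
  have hs0 : ∀ h, 0 ≤ s h := fun h => le_min zero_le_one Metric.infDist_nonneg
  have hs1 : ∀ h, s h ≤ 1 := fun h => min_le_left _ _
  have hsabs : ∀ h, |s h| ≤ 1 := fun h => by rw [abs_of_nonneg (hs0 h)]; exact hs1 h
  have hsv : ∀ i, s (v i) = 0 := fun i => by
    simp only [hsdef, Metric.infDist_zero_of_mem (mem_range_self i)]
    simp
  have hsz : ∀ h, s h = 0 → h ∈ range v := by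
    intro h hh
    have hcl : IsClosed (range v) := (Set.finite_range v).isClosed
    rw [hcl.mem_iff_infDist_zero (range_nonempty v)]
    rcases min_choice 1 (Metric.infDist h (range v)) with h1 | h1
    · have : s h = 1 := h1
      linarith
    · exact h1.symm.trans hh
  set q := TopologicalSpace.denseSeq H
  have hq : DenseRange q := TopologicalSpace.denseRange_denseSeq H
  -- the base point
  set z0 : ZZ X := (fun i => Classical.arbitrary (X i), 0, 0) with hz0
  have hz : (z0.2.1 : ℝ) = 0 := by simp [hz0]
  have hpack : ∀ j : ℕ, ∃ N : ℕ, ∀ f : Fin N → ZZ X, ∃ i i', i ≠ i' ∧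
      dist (f i) (f i') < 1 / ((((n + 1 : ℕ) : ℝ) + 2) * ((j:ℝ) + 1) ^ 2) :=
    fun j => packing (by positivity)
  choose N hN using hpack
  have hNpos : ∀ j, 0 < N j := by
    intro j
    obtain ⟨i, _⟩ := hN j fun _ => z0
    exact i.pos
  obtain ⟨B, hB⟩ : ∃ B, ∀ x y : ZZ X, dist x y ≤ B := by
    obtain ⟨B, hB⟩ := Metric.isBounded_iff.1 (isCompact_univ (X := ZZ X)).isBounded
    exact ⟨B, fun x y => hB (mem_univ _) (mem_univ _)⟩
  have hB0 : 0 ≤ B := dist_nonneg.trans (hB z0 z0)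
  set L : H → ℕ → ℝ := LL q s with hLdef
  have hL0 : ∀ h j, 0 ≤ L h j := fun h j => LL_nonneg q (hs0 h) j
  have hLle : ∀ h (j : ℕ), L h j ≤ 1 / (j + 1) := fun h j => LL_le q (hs0 h) (hs1 h) j
  have hLabs : ∀ h (j : ℕ), |L h j| ≤ 1 / (j + 1) := fun h j => by
    rw [abs_of_nonneg (hL0 h j)]; exact hLle h j
  have hLabs1 : ∀ h (j : ℕ), |L h j| ≤ 1 := fun h j => (hLabs h j).trans (by
    rw [div_le_one (by positivity)]; linarith [(Nat.cast_nonneg j : (0:ℝ) ≤ j)])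
  have hc : ∀ h, CompactSpace (Sp z0 N (fun i => A i h) (s h) (L h)) :=
    fun h => compact_Sp (hA' h) (hsabs h) (hLabs h)
  have hne : ∀ h, Nonempty (Sp z0 N (fun i => A i h) (s h) (L h)) :=
    fun h => ⟨bs z0 N _ _ _⟩
  set Φ : H → GHSpace := fun h => GG (Sp z0 N (fun i => A i h) (s h) (L h)) (hc h) with hΦ
  have hΦv : ∀ i, Φ (v i) = toGHSpace (X i) := by
    intro i
    have hLz : ∀ j, L (v i) j = 0 := fun j => by simp [hLdef, LL, hsv]
    have hD0 : ∀ k (x y : ZZ X),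
        (Dw X N (fun j => A j (v i)) (s (v i)) (L (v i)) (some k)).dist x y = 0 := by
      intro k x y
      rw [Dw_some, hLz]; simp
    have hD : ∀ (x y : ZZ X),
        (Dw X N (fun j => A j (v i)) (s (v i)) (L (v i)) none).dist x y
          = dist (x.1 i) (y.1 i) := by
      intro x y
      rw [Dw_none, wdst, hsv, Finset.sum_eq_single i]
      · simp [hA1]
      · intro j _ hj
        rw [hA0 j i hj.symm]; simp
      · simp
    refine GG_eq_of_map (hc (v i)) (fun p => match p with
      | (none, z) => z.1 i
      | (some _, _) => z0.1 i) ?_ ?_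
    · intro x
      exact ⟨pt _ z0 none (Function.update z0.1 i x, 0, 0), by simp [pt]⟩
    · intro x y
      obtain ⟨k, x, rfl⟩ := exists_pt x
      obtain ⟨l, y, rfl⟩ := exists_pt y
      cases k with
      | none =>
        cases l with
        | none => rw [dist_same, hD]; rfl
        | some l => rw [dist_diff (by simp), hD0, add_zero, hD]; rfl
      | some k =>
        cases l with
        | none => rw [dist_diff (by simp), hD0, zero_add, hD]; rfl
        | some l =>
          by_cases hkl : some k = some l
          · rw [hkl, dist_same, hD0]; exact dist_self _
          · rw [dist_diff hkl, hD0, hD0, add_zero]; exact dist_self _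
  have hΦc : Continuous Φ := by
    rw [continuous_iff_continuousAt]
    intro h
    rw [ContinuousAt, Metric.tendsto_nhds]
    intro ε hε
    -- the modulus
    set K : ℝ := 2 * ((((n + 1 : ℕ) : ℝ) + 2) * B) with hK
    have hK0 : 0 ≤ K := by positivity
    set η : ℝ := ε / (2 * (K + 1)) with hη
    have hηp : 0 < η := by positivity
    have ev1 : ∀ᶠ h' in 𝓝 h, ∀ i, dist (A i h') (A i h) < η :=
      eventually_all.2 fun i => Metric.tendsto_nhds.1 ((A i).continuous.tendsto h) η hηp
    have ev2 : ∀ᶠ h' in 𝓝 h, dist (s h') (s h) < η / 2 :=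
      Metric.tendsto_nhds.1 (hscont.tendsto h) (η / 2) (by positivity)
    have ev3 : ∀ᶠ h' in 𝓝 h, dist h' h < η / 2 := Metric.ball_mem_nhds h (by positivity)
    filter_upwards [ev1, ev2, ev3] with h' e1 e2 e3
    rw [Real.dist_eq] at e2
    have hlip : ∀ j, |L h' j - L h j| ≤ η := fun j => by
      have := LL_lip q (s := s) (h := h') (h' := h) (hs0 h') (hs1 h') j
      linarith
    have hb := dist_Sp_le (z0 := z0) (N := N) (a := fun i => A i h') (a' := fun i => A i h)
      (s := s h') (s' := s h) (L := L h') (L' := L h) (ε := η) hB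
      (fun i => (Real.dist_eq _ _ ▸ e1 i).le) (by linarith) hlip
    have hd := dist_GG_le (hc h') (hc h) (fun x => x) (fun x => ⟨x, rfl⟩) hb
    refine hd.trans_lt ?_
    have : 2 * ((((n + 1 : ℕ) : ℝ) + 2) * (η * B)) = η * K := by rw [hK]; ring
    rw [this]
    have : η * (2 * (K + 1)) = ε := by rw [hη]; field_simp
    nlinarith
  have hfat : ∀ h, 0 < s h → Fat (ZZ X) (((n + 1 : ℕ) : ℝ) + 2)
      (bs z0 N (fun i => A i h) (s h) (L h)) := fun h hh =>
    fat_base hz hh hN (hLle h) (fun j => LL_ge q (hs0 h) j)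
  have hLz : ∀ h, s h = 0 → ∀ j, L h j = 0 := fun h hh j => by simp [hLdef, LL, hh]
  have hzero : ∀ h h', Φ h = Φ h' → s h' = 0 → s h = 0 := by
    intro h h' e h0
    by_contra hcon
    have hp : 0 < s h := lt_of_le_of_ne (hs0 h) (Ne.symm hcon)
    obtain ⟨f, hf, _⟩ := exists_map_of_GG_eq (hc h) (hc h') e
    exact not_fat_of_zero (hA' h') h0 (hLz h' h0) _ ((hfat h hp).map f hf)
  have hsub : ∀ h h', Φ h = Φ h' → 0 < s h → 0 < s h' → range (L h) ⊆ range (L h') := by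
    intro h h' e hp hp'
    obtain ⟨f, hf, hf'⟩ := exists_map_of_GG_eq (hc h) (hc h') e
    have := inj_Sp f hf hf' (hA' h') (hsabs h') (hLabs1 h') (hfat h hp)
    rwa [tips_eq hz hp (hs1 h) (fun j => (by positivity : 0 < s h / ((j:ℝ) + 2)).trans_le
        (LL_ge q (hs0 h) j)) hNpos,
      tips_eq hz hp' (hs1 h') (fun j => (by positivity : 0 < s h' / ((j:ℝ) + 2)).trans_le
        (LL_ge q (hs0 h') j)) hNpos] at this
  have hΦi : Function.Injective Φ := by
    intro h h' e
    by_cases h0 : s h = 0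
    · have h0' := hzero h' h e.symm h0
      obtain ⟨i, rfl⟩ := hsz h h0
      obtain ⟨j, rfl⟩ := hsz h' h0'
      rw [hΦv, hΦv] at e
      by_contra hne
      have hij : i ≠ j := fun hij => hne (by rw [hij])
      have := hdist i j hij
      rw [ghDist, e, dist_self] at this
      exact lt_irrefl _ this
    · have h0' : s h' ≠ 0 := fun h1 => h0 (hzero h h' e h1)
      have hp : 0 < s h := lt_of_le_of_ne (hs0 h) (Ne.symm h0)
      have hp' : 0 < s h' := lt_of_le_of_ne (hs0 h') (Ne.symm h0')
      exact LL_inj q hq hp hp' ((hsub h h' e hp hp').antisymm (hsub h' h e.symm hp' hp))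
  exact ⟨Φ, (hΦc.isClosedEmbedding hΦi).isEmbedding,
    fun h => geodesic_GG (hc h) (arc_Sp hgeo), hΦv⟩

end GHE

/-- Let `H` be a compact metrizable space, `n ≥ 1`, and
`v 0, …, v n` be `n+1` distinct points of `H`.  Let `X 0, …, X n` be compact
geodesic (nonempty) metric spaces with positive pairwise Gromov–Hausdorff
distances.  Then there is a topological embedding `Φ` of `H` into the subset
`𝒢` of the Gromov–Hausdorff space consisting of compact geodesic metric
spaces such that `Φ (v i)` is the isometry class of `X i`. -/
theorem statement2 {H : Type*} [TopologicalSpace H] [CompactSpace H]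
    [TopologicalSpace.MetrizableSpace H]
    (n : ℕ) (hn : 1 ≤ n) (v : Fin (n + 1) → H) (hv : Function.Injective v)
    (X : Fin (n + 1) → Type) [∀ i, MetricSpace (X i)] [∀ i, CompactSpace (X i)]
    [∀ i, Nonempty (X i)]
    (hgeo : ∀ i, IsGeodesicSpace (X i))
    (hdist : ∀ i j, i ≠ j → 0 < ghDist (X i) (X j)) :
    ∃ Φ : H → GHSpace,
      Topology.IsEmbedding Φ ∧
      (∀ h : H, IsGeodesicSpace (Φ h).Rep) ∧
      ∀ i, Φ (v i) = toGHSpace (X i) := by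
  letI : MetricSpace H := TopologicalSpace.metrizableSpaceMetric H
  exact GHE.main n v hv X hgeo hdist
end
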